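/- arXiv:math/0204340 — 2 statements merged into one kernel-verified Lean document; each statement's English description precedes it below -/
import Mathlib

section
/- Let f : (ℝⁿ ⊕ ℂᵐ)⁺ → (ℝⁿ ⊕ ℂ^{m+k})⁺ be a continuous T-equivariant map between one-point compactifications, where T = U(1) acts trivially on ℝⁿ and by complex scalar multiplication on the complex factors. If the restriction of f to the fixed-point spheres (ℝⁿ)⁺ → (ℝⁿ)⁺ has degree 1, then k ≥ 0. -/
open OnePoint

/-- Extension of a map to one-point compactifications, sending `∞` to `∞`. -/
noncomputable def OnePoint.map' {α β : Type*} (g : α → β) : OnePoint α → OnePoint β :=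
  fun x => Option.elim x ∞ (fun a => OnePoint.some (g a))

/-!
Only the antipode `-1 ∈ T` is used: it acts on `A × V` by `(a, v) ↦ (a, -v)`. Stereographic
projection turns `f` into a map of nonzero vectors of `(ℝ × A) × V`, and a homotopy from the degree
one map on the fixed sphere to the identity, inserted on the cone `‖v‖ ≤ ‖x‖`, makes this map equal
to `x ↦ x / |x|` for `v = 0`, in particular odd there. It remains to prove a relative Borsuk–Ulam
theorem: a map into `X × W` that is equivariant for the reflections and odd on `X` has a zero when
`dim W < dim V`.

If there were no zero, labelling each vertex of a fine subdivision of the cross-polytope in `X × V`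
by the dominant coordinate of its image would put no two opposite labels on a simplex. Count,
modulo `2`, the top-dimensional simplices that have exactly `dim X` labels with index in `X`, and
whose labels in `X` and in `W`, sorted by index, each have alternating signs (Fan's cochain). Each
reflected coordinate can be removed without changing the count, since the failure of the cochain to
be invariant under the reflection is its own coboundary. On the cross-polytope of `X` the count is
`1` by the same argument for the antipodal map, whereas the pigeonhole principle makes it `0` on
that of `X × V` when `dim V > dim W`.
-/

namespace RelativeBorsukUlam

/-! ### Cochains modulo `2` -/

section Cochains

variable {α β : Type*}

/-- The codimension-one faces of the ordered simplex whose vertices are listed by `l`; the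
vertices need not be distinct, and the empty face is a face of a single vertex. -/
def faces : List α → List (List α)
  | [] => []
  | x :: l => l :: (faces l).map (x :: ·)

/-- The value of a cochain modulo `2` on a chain, the chain being encoded as the list of its
ordered simplices. -/
def eval (c : List (List α)) (φ : List α → ZMod 2) : ZMod 2 := (c.map φ).sum

/-- The coboundary modulo `2` of a cochain on ordered simplices. -/
def coboundary (φ : List α → ZMod 2) (l : List α) : ZMod 2 := eval (faces l) φ

@[simp]
theorem eval_nil (φ : List α → ZMod 2) : eval [] φ = 0 := rfl

@[simp]
theorem eval_cons (l : List α) (c : List (List α)) (φ : List α → ZMod 2) :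
    eval (l :: c) φ = φ l + eval c φ := rfl

@[simp]
theorem eval_map (f : List β → List α) (c : List (List β)) (φ : List α → ZMod 2) :
    eval (c.map f) φ = eval c (fun l => φ (f l)) := by
  simp [eval, Function.comp_def]

@[simp]
theorem eval_flatMap (f : List β → List (List α)) (c : List (List β)) (φ : List α → ZMod 2) :
    eval (c.flatMap f) φ = eval c (fun l => eval (f l) φ) := by
  induction c with
  | nil => rfl
  | cons l c ih =>
    rw [eval_cons, ← ih]
    simp [eval]

theorem eval_congr {c : List (List α)} {φ ψ : List α → ZMod 2} (h : ∀ l ∈ c, φ l = ψ l) :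
    eval c φ = eval c ψ := by
  rw [eval, List.map_congr_left h, eval]

theorem eval_add (c : List (List α)) (φ ψ : List α → ZMod 2) :
    eval c (fun l => φ l + ψ l) = eval c φ + eval c ψ :=
  List.sum_map_add

theorem eval_eq_zero {c : List (List α)} {φ : List α → ZMod 2} (h : ∀ l ∈ c, φ l = 0) :
    eval c φ = 0 := by
  rw [eval_congr h]
  simp [eval]

theorem sublist_of_mem_faces {l l' : List α} (h : l' ∈ faces l) : l'.Sublist l := by
  induction l generalizing l' with
  | nil => simp [faces] at h
  | cons x l ih =>
    simp only [faces, List.mem_cons, List.mem_map] at h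
    rcases h with rfl | ⟨a, ha, rfl⟩
    · exact List.sublist_cons_self _ _
    · exact (ih ha).cons_cons x

theorem length_of_mem_faces {l l' : List α} (h : l' ∈ faces l) : l'.length + 1 = l.length := by
  induction l generalizing l' with
  | nil => simp [faces] at h
  | cons x l ih =>
    simp only [faces, List.mem_cons, List.mem_map] at h
    rcases h with rfl | ⟨a, ha, rfl⟩
    · rfl
    · simp [ih ha]

theorem faces_map (f : α → β) (l : List α) : faces (l.map f) = (faces l).map (List.map f) := by
  induction l with
  | nil => rfl
  | cons x l ih => simp [faces, ih, Function.comp_def]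

@[simp]
theorem coboundary_nil (φ : List α → ZMod 2) : coboundary φ [] = 0 := rfl

theorem coboundary_cons (φ : List α → ZMod 2) (x : α) (l : List α) :
    coboundary φ (x :: l) = φ l + coboundary (fun l' => φ (x :: l')) l := by
  simp [coboundary, faces]

theorem coboundary_map (f : α → β) (φ : List β → ZMod 2) (l : List α) :
    coboundary (fun l' => φ (l'.map f)) l = coboundary φ (l.map f) := by
  simp [coboundary, faces_map]

theorem coboundary_mul_left (c : ZMod 2) (φ : List α → ZMod 2) (l : List α) :
    coboundary (fun l' => c * φ l') l = c * coboundary φ l :=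
  List.sum_map_mul_left _ _ _

theorem coboundary_mul_right (c : ZMod 2) (φ : List α → ZMod 2) (l : List α) :
    coboundary (fun l' => φ l' * c) l = coboundary φ l * c :=
  List.sum_map_mul_right _ _ _

theorem coboundary_coboundary (φ : List α → ZMod 2) (l : List α) :
    coboundary (coboundary φ) l = 0 := by
  induction l generalizing φ with
  | nil => rfl
  | cons x l ih =>
    have hcons : coboundary (fun l' => coboundary φ (x :: l')) l =
        coboundary φ l + coboundary (coboundary fun l' => φ (x :: l')) l := by
      rw [coboundary, eval_congr fun l' _ => coboundary_cons φ x l', eval_add]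
      rfl
    rw [coboundary_cons, hcons, ih, add_zero, CharTwo.add_self_eq_zero]

theorem coboundary_append (φ : List α → ZMod 2) (l₁ l₂ : List α) :
    coboundary φ (l₁ ++ l₂) =
      coboundary (fun l => φ (l ++ l₂)) l₁ + coboundary (fun l => φ (l₁ ++ l)) l₂ := by
  induction l₁ generalizing φ with
  | nil => simp
  | cons x l₁ ih => simp only [List.cons_append, coboundary_cons, ih, add_assoc]

theorem coboundary_perm {φ : List α → ZMod 2} (hφ : ∀ l l', l.Perm l' → φ l = φ l')
    {l l' : List α} (h : l.Perm l') : coboundary φ l = coboundary φ l' := by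
  induction h generalizing φ with
  | nil => rfl
  | cons x h ih =>
    rw [coboundary_cons, coboundary_cons, hφ _ _ h, ih fun a b hab => hφ _ _ (hab.cons x)]
  | swap x y l =>
    simp only [coboundary_cons]
    rw [coboundary, eval_congr fun l' _ => hφ _ _ (.swap _ _ l'), add_left_comm, coboundary]
  | trans _ _ ih₁ ih₂ => rw [ih₁ hφ, ih₂ hφ]

end Cochains

/-! ### Barycentric subdivision -/

section Subdivision

variable {E : Type*} [AddCommGroup E] [Module ℝ E]

/-- The geometric simplex (convex hull) spanned by a list of vertices. -/
abbrev simplex (l : List E) : Set E := convexHull ℝ {x | x ∈ l}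

/-- The barycenter of a list of points; it is `0` for the empty list. -/
noncomputable def barycenter (l : List E) : E := (l.length : ℝ)⁻¹ • l.sum

/-- The barycentric subdivision of an ordered simplex, as a chain: its simplices list the
barycenters of a descending flag of faces. -/
noncomputable def subdivision : List E → List (List E)
  | [] => [[]]
  | x :: l => (faces (x :: l)).attach.flatMap fun ⟨l', _⟩ =>
      (subdivision l').map (barycenter (x :: l) :: ·)
termination_by l => l.length
decreasing_by
  have := length_of_mem_faces ‹_›
  omega

/-- The `r`-fold iterated barycentric subdivision of an ordered simplex. -/
noncomputable def iterSubdivision : ℕ → List E → List (List E)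
  | 0, l => [l]
  | r + 1, l => (subdivision l).flatMap (iterSubdivision r)

@[simp]
theorem subdivision_nil : subdivision ([] : List E) = [[]] := by
  rw [subdivision]

theorem subdivision_cons (x : E) (l : List E) :
    subdivision (x :: l) =
      (faces (x :: l)).flatMap fun l' => (subdivision l').map (barycenter (x :: l) :: ·) := by
  rw [subdivision, List.flatMap_subtype (fun _ _ => rfl), List.unattach_attach]

theorem faces_induction {α : Type*} {p : List α → Prop} (nil : p [])
    (cons : ∀ x l, (∀ l' ∈ faces (x :: l), p l') → p (x :: l)) (l : List α) : p l := by
  induction hn : l.length using Nat.strong_induction_on generalizing l with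
  | _ n ih =>
    cases l with
    | nil => exact nil
    | cons x l =>
      refine cons x l fun l' hl' => ih _ ?_ l' rfl
      have := length_of_mem_faces hl'
      omega

theorem eval_subdivision_coboundary (φ : List E → ZMod 2) (l : List E) :
    eval (subdivision l) (coboundary φ) = coboundary (fun l' => eval (subdivision l') φ) l := by
  induction l using faces_induction generalizing φ with
  | nil => simp
  | cons x l ih =>
    set ψ : List E → ZMod 2 := fun m => φ (barycenter (x :: l) :: m)
    calc eval (subdivision (x :: l)) (coboundary φ)
        = eval (faces (x :: l)) fun l' =>
            eval (subdivision l') φ + eval (subdivision l') (coboundary ψ) := by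
          simp only [subdivision_cons, eval_flatMap, eval_map, coboundary_cons, eval_add, ψ]
      _ = coboundary (fun l' => eval (subdivision l') φ) (x :: l) +
            coboundary (coboundary fun l' => eval (subdivision l') ψ) (x :: l) := by
          rw [eval_add, eval_congr fun l' hl' => ih l' hl' ψ, coboundary, coboundary]
      _ = coboundary (fun l' => eval (subdivision l') φ) (x :: l) := by
          rw [coboundary_coboundary, add_zero]

theorem eval_iterSubdivision_coboundary (r : ℕ) (φ : List E → ZMod 2) (l : List E) :
    eval (iterSubdivision r l) (coboundary φ) =
      coboundary (fun l' => eval (iterSubdivision r l') φ) l := by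
  induction r generalizing l with
  | zero => simp [iterSubdivision]
  | succ r ih => simp only [iterSubdivision, eval_flatMap, ih, eval_subdivision_coboundary]

theorem barycenter_map {F : Type*} [AddCommGroup F] [Module ℝ F] (T : E →ₗ[ℝ] F) (l : List E) :
    barycenter (l.map T) = T (barycenter l) := by
  simp [barycenter, map_list_sum]

theorem subdivision_map {F : Type*} [AddCommGroup F] [Module ℝ F] (T : E →ₗ[ℝ] F) (l : List E) :
    subdivision (l.map T) = (subdivision l).map (List.map T) := by
  induction l using faces_induction with
  | nil => simp
  | cons x l ih =>
    have hT : T x :: l.map T = (x :: l).map T := rfl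
    rw [List.map_cons, subdivision_cons, subdivision_cons, hT, faces_map, barycenter_map,
      List.flatMap_map, List.map_flatMap]
    refine List.flatMap_congr fun l' hl' => ?_
    simp [ih l' hl']

theorem iterSubdivision_map {F : Type*} [AddCommGroup F] [Module ℝ F] (T : E →ₗ[ℝ] F) (r : ℕ)
    (l : List E) : iterSubdivision r (l.map T) = (iterSubdivision r l).map (List.map T) := by
  induction r generalizing l with
  | zero => rfl
  | succ r ih => simp [iterSubdivision, subdivision_map, List.flatMap_map, List.map_flatMap, ih]

theorem iterSubdivision_nil (r : ℕ) : iterSubdivision r ([] : List E) = [[]] := by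
  induction r with
  | zero => rfl
  | succ r ih => simp [iterSubdivision, ih]

theorem length_of_mem_subdivision {l m : List E} (hm : m ∈ subdivision l) :
    m.length = l.length := by
  induction l using faces_induction generalizing m with
  | nil => simpa using hm
  | cons x l ih =>
    simp only [subdivision_cons, List.mem_flatMap, List.mem_map] at hm
    obtain ⟨l', hl', m', hm', rfl⟩ := hm
    rw [List.length_cons, ih l' hl' hm', length_of_mem_faces hl']

theorem length_of_mem_iterSubdivision {r : ℕ} {l m : List E} (hm : m ∈ iterSubdivision r l) :
    m.length = l.length := by
  induction r generalizing l with
  | zero => rw [List.mem_singleton.1 hm]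
  | succ r ih =>
    obtain ⟨l', hl', hm⟩ := List.mem_flatMap.1 hm
    rw [ih hm, length_of_mem_subdivision hl']

theorem barycenter_cons (x : E) (l : List E) :
    barycenter (x :: l) =
      AffineMap.lineMap x (barycenter l) ((l.length : ℝ) / ((l.length : ℝ) + 1)) := by
  have hpos : (l.length : ℝ) + 1 ≠ 0 := by positivity
  rcases eq_or_ne l [] with rfl | hl
  · simp [barycenter]
  have hl' : (l.length : ℝ) ≠ 0 := by simpa using hl
  rw [AffineMap.lineMap_apply_module, barycenter, barycenter, List.length_cons, List.sum_cons,
    smul_smul, smul_add, Nat.cast_add_one]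
  congr 2 <;> field_simp
  ring

theorem barycenter_mem_simplex {l : List E} (hl : l ≠ []) : barycenter l ∈ simplex l := by
  induction l with
  | nil => exact absurd rfl hl
  | cons x l ih =>
    have hx : x ∈ simplex (x :: l) := subset_convexHull ℝ _ List.mem_cons_self
    rcases eq_or_ne l [] with rfl | hne
    · simpa [barycenter] using hx
    rw [barycenter_cons]
    refine (convex_convexHull ℝ _).lineMap_mem hx
      (convexHull_mono (fun y hy => List.mem_cons_of_mem x hy) (ih hne)) ⟨by positivity, ?_⟩
    exact div_le_one_of_le₀ (by linarith) (by positivity)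

theorem mem_simplex_of_mem_subdivision {l m : List E} (hm : m ∈ subdivision l) {x : E}
    (hx : x ∈ m) : x ∈ simplex l := by
  induction l using faces_induction generalizing m with
  | nil => simp_all
  | cons y l ih =>
    simp only [subdivision_cons, List.mem_flatMap, List.mem_map] at hm
    obtain ⟨l', hl', m', hm', rfl⟩ := hm
    rcases List.mem_cons.1 hx with rfl | hx
    · exact barycenter_mem_simplex (List.cons_ne_nil _ _)
    · exact convexHull_mono (sublist_of_mem_faces hl').subset (ih l' hl' hm' hx)

theorem mem_simplex_of_mem_iterSubdivision {r : ℕ} {l m : List E} (hm : m ∈ iterSubdivision r l)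
    {x : E} (hx : x ∈ m) : x ∈ simplex l := by
  induction r generalizing l with
  | zero =>
    rw [List.mem_singleton.1 hm] at hx
    exact subset_convexHull ℝ _ hx
  | succ r ih =>
    obtain ⟨l', hl', hm⟩ := List.mem_flatMap.1 hm
    exact convexHull_min (fun y hy => mem_simplex_of_mem_subdivision hl' hy)
      (convex_convexHull ℝ _) (ih hm)

end Subdivision

section Mesh

variable {E : Type*} [SeminormedAddCommGroup E] [NormedSpace ℝ E]

theorem simplex_subset_closedBall {l : List E} {x : E} {d : ℝ} (h : ∀ y ∈ l, dist y x ≤ d) :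
    simplex l ⊆ Metric.closedBall x d :=
  convexHull_min h (convex_closedBall _ _)

theorem dist_barycenter_le {l : List E} {d : ℝ} (hd : ∀ x ∈ l, ∀ y ∈ l, dist x y ≤ d) {n : ℕ}
    (hn : l.length ≤ n + 1) {x : E} (hx : x ∈ l) :
    dist (barycenter l) x ≤ n / (n + 1) * d := by
  classical
  have hd₀ : 0 ≤ d := dist_nonneg.trans (hd x hx x hx)
  have hperm := List.perm_cons_erase hx
  have hlen : (l.erase x).length ≤ n := by
    have := hperm.length_eq
    simp only [List.length_cons] at this
    omega
  have hbary : barycenter l = barycenter (x :: l.erase x) := by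
    rw [barycenter, barycenter, hperm.length_eq, hperm.sum_eq]
  have hdist : (l.erase x).length * dist x (barycenter (l.erase x)) ≤ (l.erase x).length * d := by
    rcases eq_or_ne (l.erase x) [] with h | h
    · simp [h]
    · rw [dist_comm]
      gcongr
      exact simplex_subset_closedBall (fun y hy => hd y (List.mem_of_mem_erase hy) x hx)
        (barycenter_mem_simplex h)
  set k : ℝ := ((l.erase x).length : ℝ)
  have hk : k ≤ n := Nat.cast_le.2 hlen
  have : 0 ≤ k := by positivity
  calc dist (barycenter l) x = k * dist x (barycenter (l.erase x)) / (k + 1) := by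
        rw [hbary, barycenter_cons, dist_lineMap_left, Real.norm_of_nonneg (by positivity)]
        ring
    _ ≤ k / (k + 1) * d := by
        rw [div_mul_eq_mul_div]
        gcongr
    _ ≤ n / (n + 1) * d := by
        gcongr 1
        rw [div_le_div_iff₀ (by positivity) (by positivity)]
        linarith

theorem dist_le_of_mem_subdivision {l : List E} {d : ℝ} (hd : ∀ x ∈ l, ∀ y ∈ l, dist x y ≤ d)
    {n : ℕ} (hn : l.length ≤ n + 1) {m : List E} (hm : m ∈ subdivision l) :
    ∀ x ∈ m, ∀ y ∈ m, dist x y ≤ n / (n + 1) * d := by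
  induction l using faces_induction generalizing m with
  | nil => simp_all
  | cons z l ih =>
    simp only [subdivision_cons, List.mem_flatMap, List.mem_map] at hm
    obtain ⟨l', hl', m', hm', rfl⟩ := hm
    have hsub := (sublist_of_mem_faces hl').subset
    have hd₀ : 0 ≤ d := dist_nonneg.trans (hd z List.mem_cons_self z List.mem_cons_self)
    have hbary : ∀ x ∈ m', dist x (barycenter (z :: l)) ≤ n / (n + 1) * d := fun x hx =>
      simplex_subset_closedBall
        (fun y hy => (dist_comm _ _).trans_le (dist_barycenter_le hd hn (hsub hy)))
        (mem_simplex_of_mem_subdivision hm' hx)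
    have hm'd := ih l' hl' (fun x hx y hy => hd x (hsub hx) y (hsub hy))
      ((sublist_of_mem_faces hl').length_le.trans hn) hm'
    simp only [List.forall_mem_cons, dist_self]
    exact ⟨⟨by positivity, fun x hx => (dist_comm _ _).trans_le (hbary x hx)⟩,
      fun x hx => ⟨hbary x hx, hm'd x hx⟩⟩

theorem dist_le_of_mem_iterSubdivision {r : ℕ} {l : List E} {d : ℝ}
    (hd : ∀ x ∈ l, ∀ y ∈ l, dist x y ≤ d) {n : ℕ} (hn : l.length ≤ n + 1) {m : List E}
    (hm : m ∈ iterSubdivision r l) :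
    ∀ x ∈ m, ∀ y ∈ m, dist x y ≤ ((n : ℝ) / (n + 1)) ^ r * d := by
  induction r generalizing l d with
  | zero =>
    rw [List.mem_singleton.1 hm]
    simpa using hd
  | succ r ih =>
    obtain ⟨l', hl', hm⟩ := List.mem_flatMap.1 hm
    rw [pow_succ, mul_assoc]
    exact ih (dist_le_of_mem_subdivision hd hn hl') ((length_of_mem_subdivision hl').trans_le hn) hm

theorem exists_iterSubdivision_dist_lt (n : ℕ) (d : ℝ) {η : ℝ} (hη : 0 < η) :
    ∃ r, ∀ l : List E, l.length ≤ n + 1 → (∀ x ∈ l, ∀ y ∈ l, dist x y ≤ d) →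
      ∀ m ∈ iterSubdivision r l, ∀ x ∈ m, ∀ y ∈ m, dist x y < η := by
  have hlim : Filter.Tendsto (fun r : ℕ => ((n : ℝ) / (n + 1)) ^ r * d) Filter.atTop (nhds 0) := by
    simpa using (tendsto_pow_atTop_nhds_zero_of_lt_one (by positivity)
      ((div_lt_one (by positivity)).2 (lt_add_one (n : ℝ)))).mul_const d
  obtain ⟨r, hr⟩ := (hlim.eventually_lt_const hη).exists
  exact ⟨r, fun l hn hd m hm x hx y hy =>
    (dist_le_of_mem_iterSubdivision hd hn hm x hx y hy).trans_lt hr⟩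

end Mesh

/-! ### The Fan cochain -/

section Fan

variable {ι : Type*}

/-- The index of a label `±i`, encoded as a pair in `ι ×ₗ Bool`. -/
def index (x : ι ×ₗ Bool) : ι := (ofLex x).1

/-- The sign of a label `±i`, encoded as a pair in `ι ×ₗ Bool`. -/
def sign (x : ι ×ₗ Bool) : Bool := (ofLex x).2

/-- The label `∓i` opposite to the label `±i`. -/
def opposite (x : ι ×ₗ Bool) : ι ×ₗ Bool := toLex (index x, !sign x)

/-- The simplex with vertex labels `l` carries no two opposite labels, expressed as: its labels are
determined by their indices. -/
def IsOppositeFree (l : List (ι ×ₗ Bool)) : Prop := Set.InjOn index {x | x ∈ l}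

/-- The indicator cochain of the label sequences whose signs alternate, starting with `s`. -/
def alternating : Bool → List (ι ×ₗ Bool) → ZMod 2
  | _, [] => 1
  | s, x :: l => if sign x = s then alternating (!s) l else 0

@[simp]
theorem sign_opposite (x : ι ×ₗ Bool) : sign (opposite x) = !sign x := rfl

theorem label_ext {x y : ι ×ₗ Bool} (hi : index x = index y) (hs : sign x = sign y) : x = y :=
  ofLex.injective (Prod.ext hi hs)

theorem IsOppositeFree.mono {l l' : List (ι ×ₗ Bool)} (h : IsOppositeFree l) (hl : l' ⊆ l) :
    IsOppositeFree l' :=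
  Set.InjOn.mono hl h

theorem coboundary_alternating (s : Bool) (l : List (ι ×ₗ Bool)) :
    coboundary (alternating s) l = alternating s l + alternating (!s) l := by
  induction l generalizing s with
  | nil => simp [alternating, CharTwo.add_self_eq_zero]
  | cons x l ih =>
    rw [coboundary_cons]
    rcases eq_or_ne (sign x) s with h | h
    · have hx : (fun l => alternating s (x :: l)) = alternating (!s) := by
        simp [alternating, h]
      have hx' : sign x ≠ !s := by simp [h]
      rw [hx, ih, Bool.not_not, add_left_comm, CharTwo.add_self_eq_zero, alternating, if_pos h,
        alternating, if_neg hx']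
    · have hx : (fun l => alternating s (x :: l)) = fun _ => 0 := by
        simp [alternating, h]
      have hx' : sign x = !s := Bool.eq_not.2 h
      rw [hx, coboundary, eval_eq_zero fun _ _ => rfl, alternating, if_neg h, alternating,
        if_pos hx', Bool.not_not, add_comm]

theorem alternating_map_opposite (s : Bool) (l : List (ι ×ₗ Bool)) :
    alternating s (l.map opposite) = alternating (!s) l := by
  induction l generalizing s with
  | nil => rfl
  | cons x l ih => simp [alternating, ih, Bool.not_eq_eq_eq_not]

theorem nodup_of_alternating_ne_zero [LinearOrder ι] {s : Bool} {l : List (ι ×ₗ Bool)}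
    (hl : l.Pairwise (· ≤ ·)) (h : alternating s l ≠ 0) : l.Nodup := by
  induction l generalizing s with
  | nil => exact List.nodup_nil
  | cons x l ih =>
    obtain ⟨hxl, hl⟩ := List.pairwise_cons.1 hl
    obtain ⟨hx, h⟩ : sign x = s ∧ alternating (!s) l ≠ 0 := by simpa [alternating] using h
    refine List.nodup_cons.2 ⟨fun hmem => ?_, ih hl h⟩
    obtain ⟨y, l, rfl⟩ := List.exists_cons_of_ne_nil (List.ne_nil_of_mem hmem)
    have hy : sign y = !s := by
      by_contra hne
      simp [alternating, hne] at h
    have hyx : y ≤ x := by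
      rcases List.mem_cons.1 hmem with rfl | hmem
      · exact le_rfl
      · exact (List.pairwise_cons.1 hl).1 x hmem
    have : x = y := le_antisymm (hxl y List.mem_cons_self) hyx
    simp [← this, hx] at hy

variable [LinearOrder ι]

/-- Fan's cochain: the indicator of the simplices whose labels, sorted by increasing index, have
alternating signs starting with `s`. -/
def fan (s : Bool) (l : List (ι ×ₗ Bool)) : ZMod 2 :=
  alternating s (Multiset.sort (l : Multiset (ι ×ₗ Bool)))

theorem fan_perm (s : Bool) {l l' : List (ι ×ₗ Bool)} (h : l.Perm l') : fan s l = fan s l' := by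
  rw [fan, fan, Multiset.coe_eq_coe.2 h]

theorem fan_nil (s : Bool) : fan s ([] : List (ι ×ₗ Bool)) = 1 := by
  simp [fan, alternating]

theorem fan_of_pairwise (s : Bool) {l : List (ι ×ₗ Bool)} (hl : l.Pairwise (· ≤ ·)) :
    fan s l = alternating s l := by
  rw [fan]
  congr 1
  exact (Multiset.coe_eq_coe.1 (Multiset.sort_eq _ _)).eq_of_pairwise' (Multiset.pairwise_sort _ _)
    hl

theorem coboundary_fan (s : Bool) (l : List (ι ×ₗ Bool)) :
    coboundary (fan s) l = fan s l + fan (!s) l := by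
  have hperm : l.Perm (Multiset.sort (l : Multiset (ι ×ₗ Bool))) :=
    (Multiset.coe_eq_coe.1 (Multiset.sort_eq _ _)).symm
  rw [coboundary_perm (fun _ _ => fan_perm s) hperm, coboundary, eval_congr fun l' hl' =>
    fan_of_pairwise s ((Multiset.pairwise_sort _ _).sublist (sublist_of_mem_faces hl'))]
  exact coboundary_alternating s _

theorem opposite_le_opposite {x y : ι ×ₗ Bool} (h : index x = index y → x = y) :
    opposite x ≤ opposite y ↔ x ≤ y := by
  rcases eq_or_ne (index x) (index y) with heq | hne
  · simp [h heq]
  · rw [Prod.Lex.le_iff, Prod.Lex.le_iff]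
    exact or_congr Iff.rfl (by simp [show (ofLex x).1 ≠ (ofLex y).1 from hne,
      show (ofLex (opposite x)).1 ≠ (ofLex (opposite y)).1 from hne])

theorem fan_map_opposite (s : Bool) {l : List (ι ×ₗ Bool)} (hl : IsOppositeFree l) :
    fan s (l.map opposite) = fan (!s) l := by
  rw [fan, ← Multiset.map_coe, ← Multiset.map_sort (r := (· ≤ ·)) opposite _ _
    fun x hx y hy => (opposite_le_opposite (hl hx hy)).symm, alternating_map_opposite, fan]

theorem fan_eq_zero (s : Bool) {l : List (ι ×ₗ Bool)} (hl : IsOppositeFree l) {P : Finset ι}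
    (hP : ∀ x ∈ l, index x ∈ P) (hcard : P.card < l.length) : fan s l = 0 := by
  by_contra h
  have hperm := Multiset.coe_eq_coe.1 (Multiset.sort_eq (l : Multiset (ι ×ₗ Bool)) (· ≤ ·))
  have hnodup : l.Nodup :=
    hperm.nodup_iff.1 (nodup_of_alternating_ne_zero (Multiset.pairwise_sort _ _) h)
  have hindex : (l.map index).Nodup := hnodup.map_on fun x hx y hy => hl hx hy
  have hsub : (l.map index).toFinset ⊆ P := fun i hi =>
    List.forall_mem_map.2 hP i (List.mem_toFinset.1 hi)
  have := Finset.card_le_card hsub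
  rw [List.toFinset_card_of_nodup hindex, List.length_map] at this
  omega

/-- The involution of the labels that reverses the signs of the indices outside `P`. -/
def oppositeOff (P : Finset ι) (x : ι ×ₗ Bool) : ι ×ₗ Bool :=
  if index x ∈ P then x else opposite x

/-- Fan's cochain relative to a set `P` of indices: among the labels of the simplex, exactly
`P.card` have their index in `P`, and the labels inside and outside `P` alternate separately. -/
def relFan (P : Finset ι) (l : List (ι ×ₗ Bool)) : ZMod 2 :=
  if l.countP (index · ∈ P) = P.card then
    fan true (l.filter (index · ∈ P)) * fan true (l.filter (index · ∉ P))
  else 0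

theorem relFan_perm (P : Finset ι) {l l' : List (ι ×ₗ Bool)} (h : l.Perm l') :
    relFan P l = relFan P l' := by
  rw [relFan, relFan, h.countP_eq, fan_perm true (h.filter _), fan_perm true (h.filter _)]

theorem relFan_append {P : Finset ι} {l₁ l₂ : List (ι ×ₗ Bool)} (h₁ : ∀ x ∈ l₁, index x ∈ P)
    (h₂ : ∀ x ∈ l₂, index x ∉ P) :
    relFan P (l₁ ++ l₂) = if l₁.length = P.card then fan true l₁ * fan true l₂ else 0 := by
  have hin₁ : l₁.filter (index · ∈ P) = l₁ := List.filter_eq_self.2 (by simpa using h₁)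
  have hin₂ : l₂.filter (index · ∈ P) = [] := List.filter_eq_nil_iff.2 (by simpa using h₂)
  have hout₁ : l₁.filter (index · ∉ P) = [] := List.filter_eq_nil_iff.2 (by simpa using h₁)
  have hout₂ : l₂.filter (index · ∉ P) = l₂ := List.filter_eq_self.2 (by simpa using h₂)
  rw [relFan, List.countP_eq_length_filter, List.filter_append, List.filter_append, hin₁, hin₂,
    hout₁, hout₂, List.append_nil, List.nil_append]

/-- On the labels inside `P` the coboundary vanishes by the pigeonhole principle. -/
theorem coboundary_relFan_append {P : Finset ι} {l₁ l₂ : List (ι ×ₗ Bool)}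
    (h₁ : ∀ x ∈ l₁, index x ∈ P) (h₂ : ∀ x ∈ l₂, index x ∉ P) (hl₁ : IsOppositeFree l₁) :
    coboundary (relFan P) (l₁ ++ l₂) =
      if l₁.length = P.card then fan true l₁ * (fan true l₂ + fan false l₂) else 0 := by
  have hinner : coboundary (fun l => relFan P (l ++ l₂)) l₁ = 0 := by
    by_cases hlen : l₁.length = P.card + 1
    · calc coboundary (fun l => relFan P (l ++ l₂)) l₁
          = coboundary (fun l => fan true l * fan true l₂) l₁ := eval_congr fun l hl => by
            have := length_of_mem_faces hl
            rw [relFan_append (fun x hx => h₁ x ((sublist_of_mem_faces hl).subset hx)) h₂,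
              if_pos (by omega)]
        _ = 0 := by
            rw [coboundary_mul_right, coboundary_fan, fan_eq_zero _ hl₁ h₁ (by omega),
              fan_eq_zero _ hl₁ h₁ (by omega), add_zero, zero_mul]
    · refine eval_eq_zero fun l hl => ?_
      have := length_of_mem_faces hl
      rw [relFan_append (fun x hx => h₁ x ((sublist_of_mem_faces hl).subset hx)) h₂,
        if_neg (by omega)]
  have houter : coboundary (fun l => relFan P (l₁ ++ l)) l₂ =
      coboundary (fun l => if l₁.length = P.card then fan true l₁ * fan true l else 0) l₂ :=
    eval_congr fun l hl =>
      relFan_append h₁ fun x hx => h₂ x ((sublist_of_mem_faces hl).subset hx)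
  rw [coboundary_append, hinner, houter, zero_add]
  split_ifs
  · rw [coboundary_mul_left, coboundary_fan, Bool.not_true]
  · exact eval_eq_zero fun _ _ => rfl

theorem coboundary_relFan (P : Finset ι) {l : List (ι ×ₗ Bool)} (hl : IsOppositeFree l) :
    coboundary (relFan P) l = relFan P l + relFan P (l.map (oppositeOff P)) := by
  set l₁ := l.filter (index · ∈ P)
  set l₂ := l.filter (index · ∉ P)
  have hperm : l.Perm (l₁ ++ l₂) := by
    simpa only [l₁, l₂, decide_not] using (List.filter_append_perm _ l).symm
  have h₁ : ∀ x ∈ l₁, index x ∈ P := fun x hx => of_decide_eq_true (List.mem_filter.1 hx).2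
  have h₂ : ∀ x ∈ l₂, index x ∉ P := fun x hx => of_decide_eq_true (List.mem_filter.1 hx).2
  have hmap₁ : l₁.map (oppositeOff P) = l₁ :=
    (List.map_congr_left fun x hx => if_pos (h₁ x hx)).trans (List.map_id' _)
  have hmap₂ : l₂.map (oppositeOff P) = l₂.map opposite :=
    List.map_congr_left fun x hx => if_neg (h₂ x hx)
  have h₂' : ∀ x ∈ l₂.map opposite, index x ∉ P := List.forall_mem_map.2 h₂
  rw [coboundary_perm (fun _ _ => relFan_perm P) hperm, relFan_perm P hperm,
    relFan_perm P (hperm.map _), List.map_append, hmap₁, hmap₂,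
    coboundary_relFan_append h₁ h₂ (hl.mono (List.filter_subset_self _)), relFan_append h₁ h₂,
    relFan_append h₁ h₂', fan_map_opposite _ (hl.mono (List.filter_subset_self _))]
  split_ifs
  · rw [mul_add, Bool.not_true]
  · rw [add_zero]

theorem relFan_empty (l : List (ι ×ₗ Bool)) : relFan ∅ l = fan true l := by
  simpa [fan_nil] using relFan_append (P := ∅) (l₁ := []) (l₂ := l) (by simp) (by simp)

theorem relFan_eq_fan {P : Finset ι} {l : List (ι ×ₗ Bool)} (hP : ∀ x ∈ l, index x ∈ P)
    (hlen : l.length = P.card) : relFan P l = fan true l := by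
  simpa [fan_nil, hlen] using relFan_append (l₂ := []) hP (by simp)

theorem relFan_eq_zero [Fintype ι] (P : Finset ι) {l : List (ι ×ₗ Bool)} (hl : IsOppositeFree l)
    (hcard : Fintype.card ι < l.length) : relFan P l = 0 := by
  rw [relFan]
  split_ifs with hcount
  · have hlen := l.length_eq_countP_add_countP (index · ∈ P)
    have hP := P.card_add_card_compl
    rw [fan_eq_zero true (P := Pᶜ) (hl.mono (List.filter_subset_self _))
      (fun x hx => Finset.mem_compl.2 (of_decide_eq_true (List.mem_filter.1 hx).2)), mul_zero]
    simp only [← List.countP_eq_length_filter, decide_not, decide_eq_true_eq] at hlen ⊢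
    omega
  · rfl

end Fan

/-! ### Cross-polytopes -/

section CrossPolytope

variable {E : Type*} [AddCommGroup E]

/-- The facets `[±e₁, …, ±eₙ]` of the cross-polytope with vertices `±e` for `e` in the list. -/
def crossFacets : List E → List (List E)
  | [] => [[]]
  | e :: es => (crossFacets es).flatMap fun l => [e :: l, -e :: l]

theorem mem_crossFacets_cons {e : E} {es l : List E} :
    l ∈ crossFacets (e :: es) ↔ ∃ l' ∈ crossFacets es, l = e :: l' ∨ l = -e :: l' := by
  simp [crossFacets]

theorem cons_mem_crossFacets {es l : List E} (hl : l ∈ crossFacets es) (e : E) :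
    e :: l ∈ crossFacets (e :: es) :=
  mem_crossFacets_cons.2 ⟨l, hl, .inl rfl⟩

theorem length_of_mem_crossFacets {es l : List E} (hl : l ∈ crossFacets es) :
    l.length = es.length := by
  induction es generalizing l with
  | nil => rw [List.mem_singleton.1 hl]
  | cons e es ih =>
    obtain ⟨l', hl', rfl | rfl⟩ := mem_crossFacets_cons.1 hl <;> simp [ih hl']

theorem eval_crossFacets_cons (φ : List E → ZMod 2) (e : E) (es : List E) :
    eval (crossFacets (e :: es)) φ =
      eval (crossFacets es) (fun l => φ (e :: l)) + eval (crossFacets es) fun l => φ (-e :: l) := by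
  simp [crossFacets, ← eval_add]

theorem eval_crossFacets_coboundary (φ : List E → ZMod 2) (es : List E) :
    eval (crossFacets es) (coboundary φ) = 0 := by
  induction es generalizing φ with
  | nil => simp [crossFacets]
  | cons e es ih =>
    simp only [eval_crossFacets_cons, coboundary_cons, eval_add]
    rw [ih, ih, add_zero, CharTwo.add_self_eq_zero]

theorem crossFacets_map_perm (T : E →+ E) {es : List E}
    (hT : ∀ e ∈ es, T e = e ∨ T e = -e) :
    ((crossFacets es).map (List.map T)).Perm (crossFacets es) := by
  induction es with
  | nil => exact .refl _
  | cons e es ih =>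
    obtain ⟨he, hes⟩ := List.forall_mem_cons.1 hT
    have hflat : (crossFacets (e :: es)).map (List.map T) =
        ((crossFacets es).map (List.map T)).flatMap fun l => [T e :: l, -T e :: l] := by
      simp [crossFacets, List.map_flatMap, List.flatMap_map]
    rw [hflat]
    refine ((ih hes).flatMap_right _).trans (List.Perm.flatMap_left _ fun l _ => ?_)
    rcases he with he | he
    · rw [he]
    · rw [he, neg_neg]
      exact .swap _ _ _

/-- The facets through `-e` are the images under `T` of those through `e`, so the two halves add up
to a coboundary; coned off at `e`, it leaves the equator and a coboundary on a cycle. -/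
theorem eval_crossFacets_cons_of_transfer {Φ : List E → ZMod 2} {T : E →+ E} {e : E}
    {es : List E} (he : T e = -e) (hes : ∀ e' ∈ es, T e' = e' ∨ T e' = -e')
    (hΦ : ∀ l ∈ crossFacets es, Φ (e :: l) + Φ ((e :: l).map T) = coboundary Φ (e :: l)) :
    eval (crossFacets (e :: es)) Φ = eval (crossFacets es) Φ := by
  have hneg : eval (crossFacets es) (fun l => Φ (-e :: l)) =
      eval (crossFacets es) fun l => Φ ((e :: l).map T) := by
    rw [eval, ← ((crossFacets_map_perm T hes).map _).sum_eq, ← eval, eval_map]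
    simp only [List.map_cons, he]
  calc eval (crossFacets (e :: es)) Φ
      = eval (crossFacets es) fun l => Φ (e :: l) + Φ ((e :: l).map T) := by
        rw [eval_crossFacets_cons, hneg, eval_add]
    _ = eval (crossFacets es) fun l => Φ l + coboundary (fun l' => Φ (e :: l')) l :=
        eval_congr fun l hl => (hΦ l hl).trans (coboundary_cons Φ e l)
    _ = eval (crossFacets es) Φ := by
        rw [eval_add]
        exact (congrArg _ (eval_crossFacets_coboundary _ es)).trans (add_zero _)

theorem eval_crossFacets_append_of_transfer {Φ : List E → ZMod 2} {T : E →+ E} {vs xs : List E}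
    (hvs : ∀ v ∈ vs, T v = -v) (hxs : ∀ x ∈ xs, T x = x)
    (hΦ : ∀ es, es <:+ vs ++ xs → ∀ l ∈ crossFacets es, Φ l + Φ (l.map T) = coboundary Φ l) :
    eval (crossFacets (vs ++ xs)) Φ = eval (crossFacets xs) Φ := by
  induction vs with
  | nil => rfl
  | cons v vs ih =>
    obtain ⟨hv, hvs⟩ := List.forall_mem_cons.1 hvs
    rw [List.cons_append, eval_crossFacets_cons_of_transfer hv (List.forall_mem_append.2
      ⟨fun e he => .inr (hvs e he), fun e he => .inl (hxs e he)⟩)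
      fun l hl => hΦ _ List.suffix_rfl _ (cons_mem_crossFacets hl v),
      ih hvs fun es hes => hΦ es (hes.trans (List.suffix_cons _ _))]

variable [Module ℝ E]

/-- The boundary of the cross-polytope with vertices `±e` for `e` in the list. -/
def crossSphere (es : List E) : Set E := ⋃ l ∈ crossFacets es, simplex l

theorem simplex_subset_crossSphere {es l : List E} (hl : l ∈ crossFacets es) :
    simplex l ⊆ crossSphere es :=
  Set.subset_biUnion_of_mem hl

theorem crossSphere_mono {es es' : List E} (h : es <:+ es') :
    crossSphere es ⊆ crossSphere es' := by
  obtain ⟨ds, rfl⟩ := h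
  induction ds with
  | nil => rfl
  | cons d ds ih =>
    refine ih.trans (Set.iUnion₂_subset fun l hl => ?_)
    exact (convexHull_mono fun x hx => List.mem_cons_of_mem d hx).trans
      (simplex_subset_crossSphere (cons_mem_crossFacets hl d))

end CrossPolytope

section Parity

variable {E ι : Type*} [AddCommGroup E] [Module ℝ E] [LinearOrder ι]

/-- The number modulo `2` of simplices of the `r`-fold subdivision of `l` counted by the relative
Fan cochain, for the vertex labelling `lab`. -/
noncomputable def fanCount (P : Finset ι) (lab : E → ι ×ₗ Bool) (r : ℕ) (l : List E) : ZMod 2 :=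
  eval (iterSubdivision r l) fun m => relFan P (m.map lab)

theorem fanCount_add_fanCount_map {P : Finset ι} {lab : E → ι ×ₗ Bool} {r : ℕ} {l : List E}
    {T : E →ₗ[ℝ] E} (hT : ∀ x ∈ simplex l, lab (T x) = oppositeOff P (lab x))
    (hfree : ∀ m ∈ iterSubdivision r l, IsOppositeFree (m.map lab)) :
    fanCount P lab r l + fanCount P lab r (l.map T) = coboundary (fanCount P lab r) l := by
  have hmap : ∀ m ∈ iterSubdivision r l, (m.map T).map lab = (m.map lab).map (oppositeOff P) := by
    intro m hm
    rw [List.map_map, List.map_map]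
    exact List.map_congr_left fun x hx => hT x (mem_simplex_of_mem_iterSubdivision hm hx)
  calc fanCount P lab r l + fanCount P lab r (l.map T)
      = eval (iterSubdivision r l) fun m =>
          relFan P (m.map lab) + relFan P ((m.map lab).map (oppositeOff P)) := by
        rw [fanCount, fanCount, iterSubdivision_map, eval_map, ← eval_add]
        exact eval_congr fun m hm => by rw [hmap m hm]
    _ = eval (iterSubdivision r l) (coboundary fun m => relFan P (m.map lab)) :=
        eval_congr fun m hm => by rw [coboundary_map, coboundary_relFan P (hfree m hm)]
    _ = coboundary (fanCount P lab r) l := eval_iterSubdivision_coboundary _ _ _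

theorem eval_fanCount_append {P : Finset ι} {lab : E → ι ×ₗ Bool} {r : ℕ} {vs xs : List E}
    {T : E →ₗ[ℝ] E} (hvs : ∀ v ∈ vs, T v = -v) (hxs : ∀ x ∈ xs, T x = x)
    (hT : ∀ x ∈ crossSphere (vs ++ xs), lab (T x) = oppositeOff P (lab x))
    (hfree : ∀ es, es <:+ vs ++ xs → ∀ l ∈ crossFacets es, ∀ m ∈ iterSubdivision r l,
      IsOppositeFree (m.map lab)) :
    eval (crossFacets (vs ++ xs)) (fanCount P lab r) =
      eval (crossFacets xs) (fanCount P lab r) :=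
  eval_crossFacets_append_of_transfer (T := T.toAddMonoidHom) hvs hxs fun es hes l hl =>
    fanCount_add_fanCount_map
      (fun x hx => hT x (crossSphere_mono hes (simplex_subset_crossSphere hl hx)))
      (hfree es hes l hl)

theorem eval_fanCount_empty {lab : E → ι ×ₗ Bool} {r : ℕ} {xs : List E}
    (hneg : ∀ x ∈ crossSphere xs, lab (-x) = opposite (lab x))
    (hfree : ∀ es, es <:+ xs → ∀ l ∈ crossFacets es, ∀ m ∈ iterSubdivision r l,
      IsOppositeFree (m.map lab)) :
    eval (crossFacets xs) (fanCount ∅ lab r) = 1 := by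
  have h := eval_fanCount_append (P := ∅) (lab := lab) (r := r) (vs := xs) (xs := [])
    (T := -LinearMap.id) (fun _ _ => rfl) (by simp)
    (by simpa [oppositeOff] using hneg) (by simpa using hfree)
  rw [List.append_nil] at h
  rw [h]
  simp [crossFacets, fanCount, iterSubdivision_nil, relFan_empty, fan_nil]

theorem index_mem_of_oppositeOff_eq_self {P : Finset ι} {x : ι ×ₗ Bool}
    (h : oppositeOff P x = x) : index x ∈ P := by
  by_contra hx
  rw [oppositeOff, if_neg hx] at h
  simpa using congrArg sign h

theorem map_eq_self_of_mem_crossFacets {T : E →ₗ[ℝ] E} {xs l : List E} (hxs : ∀ x ∈ xs, T x = x)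
    (hl : l ∈ crossFacets xs) {x : E} (hx : x ∈ l) : T x = x := by
  induction xs generalizing l with
  | nil => simp [List.mem_singleton.1 hl] at hx
  | cons z xs ih =>
    obtain ⟨hz, hxs⟩ := List.forall_mem_cons.1 hxs
    obtain ⟨l', hl', rfl | rfl⟩ := mem_crossFacets_cons.1 hl <;>
    · rcases List.mem_cons.1 hx with rfl | hx
      · simp [hz]
      · exact ih hxs hl' hx

theorem map_eq_self_of_mem_crossSphere {T : E →ₗ[ℝ] E} {xs : List E} (hxs : ∀ x ∈ xs, T x = x)
    {x : E} (hx : x ∈ crossSphere xs) : T x = x := by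
  obtain ⟨l, hl, hx⟩ := Set.mem_iUnion₂.1 hx
  have hvert : {y | y ∈ l} ⊆ (LinearMap.eqLocus T LinearMap.id : Set E) :=
    fun y hy => map_eq_self_of_mem_crossFacets hxs hl hy
  exact convexHull_min hvert (Submodule.convex _) hx

/-- A Tucker-type lemma: transfer along `T` removes the vertices in `vs`, and on the part fixed by
`T` the relative count is the ordinary Fan count of an antipodal labelling. -/
theorem eval_fanCount_eq_one {P : Finset ι} {lab : E → ι ×ₗ Bool} {r : ℕ} {vs xs : List E}
    {T : E →ₗ[ℝ] E} (hvs : ∀ v ∈ vs, T v = -v) (hxs : ∀ x ∈ xs, T x = x)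
    (hlen : xs.length = P.card)
    (hT : ∀ x ∈ crossSphere (vs ++ xs), lab (T x) = oppositeOff P (lab x))
    (hneg : ∀ x ∈ crossSphere xs, lab (-x) = opposite (lab x))
    (hfree : ∀ es, es <:+ vs ++ xs → ∀ l ∈ crossFacets es, ∀ m ∈ iterSubdivision r l,
      IsOppositeFree (m.map lab)) :
    eval (crossFacets (vs ++ xs)) (fanCount P lab r) = 1 := by
  have hsuffix : xs <:+ vs ++ xs := List.suffix_append _ _
  have hindex : ∀ x ∈ crossSphere xs, index (lab x) ∈ P := fun x hx =>
    index_mem_of_oppositeOff_eq_self <| by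
      rw [← hT x (crossSphere_mono hsuffix hx), map_eq_self_of_mem_crossSphere hxs hx]
  have hfixed : ∀ l ∈ crossFacets xs, fanCount P lab r l = fanCount ∅ lab r l := by
    refine fun l hl => eval_congr fun m hm => ?_
    rw [relFan_empty, relFan_eq_fan]
    · exact List.forall_mem_map.2 fun x hx => hindex x
        (simplex_subset_crossSphere hl (mem_simplex_of_mem_iterSubdivision hm hx))
    · rw [List.length_map, length_of_mem_iterSubdivision hm, length_of_mem_crossFacets hl, hlen]
  rw [eval_fanCount_append hvs hxs hT hfree, eval_congr hfixed,
    eval_fanCount_empty hneg fun es hes => hfree es (hes.trans hsuffix)]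

theorem length_le_card_of_isOppositeFree [Fintype ι] {P : Finset ι} {lab : E → ι ×ₗ Bool} {r : ℕ}
    {vs xs : List E} {T : E →ₗ[ℝ] E} (hvs : ∀ v ∈ vs, T v = -v) (hxs : ∀ x ∈ xs, T x = x)
    (hlen : xs.length = P.card)
    (hT : ∀ x ∈ crossSphere (vs ++ xs), lab (T x) = oppositeOff P (lab x))
    (hneg : ∀ x ∈ crossSphere xs, lab (-x) = opposite (lab x))
    (hfree : ∀ es, es <:+ vs ++ xs → ∀ l ∈ crossFacets es, ∀ m ∈ iterSubdivision r l,
      IsOppositeFree (m.map lab)) :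
    (vs ++ xs).length ≤ Fintype.card ι := by
  by_contra! hcard
  have hzero : eval (crossFacets (vs ++ xs)) (fanCount P lab r) = 0 :=
    eval_eq_zero fun l hl => eval_eq_zero fun m hm =>
      relFan_eq_zero P (hfree _ List.suffix_rfl l hl m hm) <| by
        rwa [List.length_map, length_of_mem_iterSubdivision hm, length_of_mem_crossFacets hl]
  exact zero_ne_one (hzero.symm.trans (eval_fanCount_eq_one hvs hxs hlen hT hneg hfree))

end Parity

/-! ### Dominant coordinates -/

section DominantLabel

variable {ι : Type*} [Fintype ι] [Nonempty ι]

/-- An index at which `|a|` is maximal, chosen as a function of `|a|` only. -/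
noncomputable def dominantIndex (a : ι → ℝ) : ι := (Finite.exists_max |a|).choose

/-- The label `±i` such that `±aᵢ` is the largest coordinate of `a` in absolute value; it is
meaningful for `a ≠ 0`. -/
noncomputable def dominantLabel (a : ι → ℝ) : ι ×ₗ Bool :=
  toLex (dominantIndex a, decide (0 < a (dominantIndex a)))

theorem abs_apply_dominantIndex (a : ι → ℝ) : |a (dominantIndex a)| = ‖a‖ :=
  le_antisymm (norm_le_pi_norm a _) <| (pi_norm_le_iff_of_nonneg (abs_nonneg _)).2
    (Finite.exists_max |a|).choose_spec

theorem dominantIndex_congr {a b : ι → ℝ} (h : |a| = |b|) : dominantIndex a = dominantIndex b := by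
  simp only [dominantIndex, h]

theorem dominantLabel_congr {a b : ι → ℝ} (habs : |a| = |b|)
    (h : a (dominantIndex a) = b (dominantIndex a)) : dominantLabel a = dominantLabel b := by
  rw [dominantLabel, dominantLabel, ← dominantIndex_congr habs, h]

theorem dominantLabel_neg {a : ι → ℝ} (ha : a ≠ 0) :
    dominantLabel (-a) = opposite (dominantLabel a) := by
  have hindex : dominantIndex (-a) = dominantIndex a := dominantIndex_congr (abs_neg a)
  have hne : a (dominantIndex a) ≠ 0 := by
    rwa [← abs_pos, abs_apply_dominantIndex, norm_pos_iff]
  refine label_ext hindex ?_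
  change decide (0 < -a (dominantIndex (-a))) = !decide (0 < a (dominantIndex a))
  rw [hindex, ← decide_not, decide_eq_decide, Left.neg_pos_iff, not_lt, le_iff_lt_or_eq,
    or_iff_left hne]

theorem dominantLabel_eq_oppositeOff [LinearOrder ι] {P : Finset ι} {a b : ι → ℝ} (ha : a ≠ 0)
    (hP : ∀ i ∈ P, b i = a i) (hPc : ∀ i ∉ P, b i = -a i) :
    dominantLabel b = oppositeOff P (dominantLabel a) := by
  have habs : |b| = |a| := by
    ext i
    by_cases hi : i ∈ P <;> simp [hP, hPc, hi]
  have hindex : index (dominantLabel a) = dominantIndex b := dominantIndex_congr habs.symm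
  by_cases hi : dominantIndex b ∈ P
  · rw [oppositeOff, hindex, if_pos hi]
    exact dominantLabel_congr habs (hP _ hi)
  · rw [oppositeOff, hindex, if_neg hi, ← dominantLabel_neg ha]
    exact dominantLabel_congr (habs.trans (abs_neg a).symm) (hPc _ hi)

theorem dominantLabel_eq_of_dist_lt {a b : ι → ℝ} {δ : ℝ} (ha : δ ≤ ‖a‖) (hb : δ ≤ ‖b‖)
    (hab : dist a b < δ) (h : dominantIndex a = dominantIndex b) :
    dominantLabel a = dominantLabel b := by
  have hclose : |a (dominantIndex a) - b (dominantIndex a)| < δ :=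
    (norm_le_pi_norm (a - b) _).trans_lt (dist_eq_norm a b ▸ hab)
  rw [← abs_apply_dominantIndex] at ha hb
  rw [← h] at hb
  have hsign : 0 < a (dominantIndex a) ↔ 0 < b (dominantIndex a) := by grind
  exact label_ext h (decide_eq_decide.2 (h ▸ hsign))

end DominantLabel

section Zero

variable {E ι : Type*} [NormedAddCommGroup E] [NormedSpace ℝ E]

theorem isCompact_crossSphere (es : List E) : IsCompact (crossSphere es) :=
  (List.finite_toSet (crossFacets es)).isCompact_biUnion fun l _ =>
    (List.finite_toSet l).isCompact_convexHull ℝ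

theorem mem_crossSphere_self {es : List E} {e : E} (he : e ∈ es) : e ∈ crossSphere es := by
  refine simplex_subset_crossSphere (l := es) ?_ (subset_convexHull ℝ _ he)
  clear he
  induction es with
  | nil => exact List.mem_singleton_self _
  | cons e es ih => exact cons_mem_crossFacets ih e

theorem exists_isOppositeFree_dominantLabel [Fintype ι] [Nonempty ι] {es : List E}
    {F : E → ι → ℝ} (hF : ContinuousOn F (crossSphere es)) (hne : ∀ p ∈ crossSphere es, F p ≠ 0) :
    ∃ r, ∀ es', es' <:+ es → ∀ l ∈ crossFacets es', ∀ m ∈ iterSubdivision r l,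
      IsOppositeFree (m.map fun p => dominantLabel (F p)) := by
  have hcompact := isCompact_crossSphere es
  obtain ⟨δ, hδ, hδF⟩ : ∃ δ > 0, ∀ p ∈ crossSphere es, δ ≤ ‖F p‖ :=
    hcompact.exists_forall_le' hF.norm fun p hp => norm_pos_iff.2 (hne p hp)
  obtain ⟨η, hη, hηF⟩ :=
    Metric.uniformContinuousOn_iff.1 (hcompact.uniformContinuousOn_of_continuous hF) δ hδ
  obtain ⟨r, hr⟩ := exists_iterSubdivision_dist_lt (E := E) es.length
    (Metric.diam (crossSphere es)) hη
  refine ⟨r, fun es' hes' l hl m hm => ?_⟩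
  have hsub : simplex l ⊆ crossSphere es :=
    (simplex_subset_crossSphere hl).trans (crossSphere_mono hes')
  have hmem : ∀ x ∈ m, x ∈ crossSphere es := fun x hx =>
    hsub (mem_simplex_of_mem_iterSubdivision hm hx)
  have hlength : l.length ≤ es.length + 1 := by
    rw [length_of_mem_crossFacets hl]
    exact hes'.length_le.trans (Nat.le_succ _)
  have hdiam : ∀ x ∈ l, ∀ y ∈ l, dist x y ≤ Metric.diam (crossSphere es) := fun x hx y hy =>
    Metric.dist_le_diam_of_mem hcompact.isBounded (hsub (subset_convexHull ℝ _ hx))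
      (hsub (subset_convexHull ℝ _ hy))
  intro a ha b hb hab
  obtain ⟨x, hx, rfl⟩ := List.mem_map.1 ha
  obtain ⟨y, hy, rfl⟩ := List.mem_map.1 hb
  exact dominantLabel_eq_of_dist_lt (hδF x (hmem x hx)) (hδF y (hmem y hy))
    (hηF x (hmem x hx) y (hmem y hy) (hr l hlength hdiam m hm x hx y hy)) hab

theorem exists_eq_zero_of_mem_crossSphere [Fintype ι] {P : Finset ι} {vs xs : List E}
    {T : E →ₗ[ℝ] E} {F : E → ι → ℝ} (hvs : ∀ v ∈ vs, T v = -v) (hxs : ∀ x ∈ xs, T x = x)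
    (hlen : xs.length = P.card) (hcard : Fintype.card ι < (vs ++ xs).length)
    (hF : ContinuousOn F (crossSphere (vs ++ xs)))
    (hP : ∀ p ∈ crossSphere (vs ++ xs), ∀ i ∈ P, F (T p) i = F p i)
    (hPc : ∀ p ∈ crossSphere (vs ++ xs), ∀ i ∉ P, F (T p) i = -F p i)
    (hodd : ∀ p ∈ crossSphere xs, F (-p) = -F p) :
    ∃ p ∈ crossSphere (vs ++ xs), F p = 0 := by
  by_contra! hne
  obtain ⟨e, he⟩ := List.exists_mem_of_length_pos (Nat.zero_lt_of_lt hcard)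
  obtain ⟨i, -⟩ := Function.ne_iff.1 (hne e (mem_crossSphere_self he))
  have : Nonempty ι := ⟨i⟩
  classical
  let _ : LinearOrder ι := linearOrderOfSTO WellOrderingRel
  obtain ⟨r, hfree⟩ := exists_isOppositeFree_dominantLabel hF hne
  refine hcard.not_ge (length_le_card_of_isOppositeFree hvs hxs hlen
    (fun p hp => dominantLabel_eq_oppositeOff (hne p hp) (hP p hp) (hPc p hp))
    (fun p hp => ?_) hfree)
  rw [hodd p hp, dominantLabel_neg (hne p (crossSphere_mono (List.suffix_append _ _) hp))]

end Zero

/-! ### The relative Borsuk–Ulam theorem -/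

section BorsukUlam

theorem exists_eq_smul_basis_of_mem_crossFacets {E ι : Type*} [AddCommGroup E] [Module ℝ E]
    (b : Module.Basis ι ℝ E) {is : List ι} (his : is.Nodup) {l : List E}
    (hl : l ∈ crossFacets (is.map b)) :
    ∃ ε : ι → ℝ, ∀ x ∈ l, ∃ i ∈ is, x = ε i • b i ∧ ε i * ε i = 1 := by
  classical
  induction is generalizing l with
  | nil => simp [List.mem_singleton.1 hl]
  | cons i is ih =>
    obtain ⟨hi, his⟩ := List.nodup_cons.1 his
    obtain ⟨l', hl', hl⟩ := mem_crossFacets_cons.1 hl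
    obtain ⟨ε, hε⟩ := ih his hl'
    obtain ⟨s, hs, rfl⟩ : ∃ s : ℝ, s * s = 1 ∧ l = s • b i :: l' := by
      rcases hl with rfl | rfl
      · exact ⟨1, by simp⟩
      · exact ⟨-1, by simp⟩
    refine ⟨Function.update ε i s, List.forall_mem_cons.2 ⟨⟨i, by simp [hs]⟩, fun x hx => ?_⟩⟩
    obtain ⟨j, hj, hxj⟩ := hε x hx
    refine ⟨j, List.mem_cons_of_mem _ hj, ?_⟩
    rwa [Function.update_of_ne (ne_of_mem_of_not_mem hj hi)]

theorem zero_notMem_crossSphere {E ι : Type*} [AddCommGroup E] [Module ℝ E]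
    (b : Module.Basis ι ℝ E) {is : List ι} (his : is.Nodup) : 0 ∉ crossSphere (is.map b) := by
  intro h
  obtain ⟨l, hl, h⟩ := Set.mem_iUnion₂.1 h
  obtain ⟨ε, hε⟩ := exists_eq_smul_basis_of_mem_crossFacets b his hl
  have hsub : simplex l ⊆ {x | b.constr ℝ ε x = 1} := by
    refine convexHull_min (fun x hx => ?_) (convex_hyperplane (b.constr ℝ ε).isLinear 1)
    obtain ⟨i, -, rfl, hi⟩ := hε x hx
    simpa using hi
  simpa using hsub h

theorem zero_notMem_crossSphere_prod {X V : Type*} [AddCommGroup X] [Module ℝ X]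
    [AddCommGroup V] [Module ℝ V] {n k : ℕ} (bX : Module.Basis (Fin n) ℝ X)
    (bV : Module.Basis (Fin k) ℝ V) :
    (0 : X × V) ∉ crossSphere ((List.finRange k).map (fun j => (0, bV j)) ++
      (List.finRange n).map fun i => (bX i, 0)) := by
  have hnodup : ((List.finRange k).map Sum.inr ++ (List.finRange n).map Sum.inl).Nodup :=
    ((List.nodup_finRange k).map Sum.inr_injective).append
      ((List.nodup_finRange n).map Sum.inl_injective) (by simp [List.disjoint_left])
  simpa [Function.comp_def] using zero_notMem_crossSphere (bX.prod bV) hnodup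

theorem exists_ne_zero_eq_zero_of_finrank_lt {X V W : Type*}
    [NormedAddCommGroup X] [NormedSpace ℝ X] [FiniteDimensional ℝ X]
    [NormedAddCommGroup V] [NormedSpace ℝ V] [FiniteDimensional ℝ V]
    [NormedAddCommGroup W] [NormedSpace ℝ W] [FiniteDimensional ℝ W]
    (hVW : Module.finrank ℝ W < Module.finrank ℝ V) {F : X × V → X × W}
    (hF : ContinuousOn F {0}ᶜ) (hequiv : ∀ p, F (p.1, -p.2) = ((F p).1, -(F p).2))
    (hodd : ∀ x ≠ 0, F (-x, 0) = -F (x, 0)) : ∃ p ≠ 0, F p = 0 := by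
  let bX := Module.finBasis ℝ X
  let bV := Module.finBasis ℝ V
  let bW := Module.finBasis ℝ W
  let coords := (bX.prod bW).equivFun
  let vs : List (X × V) := (List.finRange _).map fun j => (0, bV j)
  let xs : List (X × V) := (List.finRange _).map fun i => (bX i, 0)
  let T : X × V →ₗ[ℝ] X × V := LinearMap.prodMap .id (-.id)
  have hxs : ∀ x ∈ xs, T x = x := by simp [xs, T]
  have hzero : 0 ∉ crossSphere (vs ++ xs) := zero_notMem_crossSphere_prod bX bV
  have hne : ∀ p ∈ crossSphere (vs ++ xs), p ≠ 0 := fun p hp => ne_of_mem_of_not_mem hp hzero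
  have hodd : ∀ p ∈ crossSphere xs, F (-p) = -F p := by
    rintro ⟨x, v⟩ hp
    have : IsAddTorsionFree V := .of_isTorsionFree ℝ V
    have hv : v = 0 :=
      neg_eq_self.1 (congrArg Prod.snd (map_eq_self_of_mem_crossSphere hxs hp))
    subst hv
    have hx : x ≠ 0 := by
      rintro rfl
      exact hne _ (crossSphere_mono (List.suffix_append vs xs) hp) rfl
    simpa using hodd x hx
  obtain ⟨p, hp, hFp⟩ := exists_eq_zero_of_mem_crossSphere (P := Finset.univ.map .inl)
    (T := T) (vs := vs) (F := fun p => coords (F p)) (by simp [vs, T]) hxs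
    (by simp [xs]) (by simpa [vs, xs, add_comm] using hVW)
    (coords.toLinearMap.continuous_of_finiteDimensional.comp_continuousOn (hF.mono hne))
    (fun p _ i hi => by
      obtain ⟨j, -, rfl⟩ := Finset.mem_map.1 hi
      change bX.repr (F (p.1, -p.2)).1 j = bX.repr (F p).1 j
      rw [hequiv])
    (fun p _ i hi => by
      obtain j | j := i
      · simp at hi
      · change bW.repr (F (p.1, -p.2)).2 j = -bW.repr (F p).2 j
        rw [hequiv, map_neg, Finsupp.neg_apply])
    (fun p hp => by rw [hodd p hp, map_neg])
  exact ⟨p, hne p hp, by simpa using hFp⟩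

end BorsukUlam

/-! ### Stereographic projection -/

section Stereographic

theorem map'_coe {α β : Type*} (g : α → β) (a : α) : map' g (a : OnePoint α) = (g a : OnePoint β) :=
  rfl

variable {V W : Type*} [NormedAddCommGroup V] [NormedAddCommGroup W]

/-- The Euclidean length on `ℝ × V`, which differs from its (supremum) norm. -/
noncomputable def radius (q : ℝ × V) : ℝ := √(q.1 ^ 2 + ‖q.2‖ ^ 2)

theorem radius_sq (q : ℝ × V) : radius q ^ 2 = q.1 ^ 2 + ‖q.2‖ ^ 2 := Real.sq_sqrt (by positivity)

theorem radius_pos {q : ℝ × V} (hq : q ≠ 0) : 0 < radius q := by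
  refine Real.sqrt_pos.2 ?_
  by_cases h : q.1 = 0
  · have : q.2 ≠ 0 := fun h' => hq (Prod.ext h h')
    positivity
  · positivity

theorem radius_neg (q : ℝ × V) : radius (-q) = radius q := by
  simp [radius]

theorem continuous_radius : Continuous (radius : ℝ × V → ℝ) := by
  unfold radius
  fun_prop

variable [NormedSpace ℝ V] [NormedSpace ℝ W]

/-- The inverse of the stereographic projection from the pole `(1, 0)`, identifying `OnePoint V`
with the sphere `radius q = 1` in `ℝ × V`. -/
noncomputable def stereoInv (x : OnePoint V) : ℝ × V :=
  x.elim (1, 0) fun y => ((‖y‖ ^ 2 - 1) / (‖y‖ ^ 2 + 1), (2 / (‖y‖ ^ 2 + 1)) • y)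

/-- The stereographic projection from the pole `(1, 0)`, extended to the nonzero vectors of `ℝ × V`
so as to be constant on rays. -/
noncomputable def stereo (q : ℝ × V) : OnePoint V :=
  if q.1 < radius q then ((radius q - q.1)⁻¹ • q.2 : V) else ∞

@[simp]
theorem stereoInv_infty : stereoInv (∞ : OnePoint V) = (1, 0) := rfl

@[simp]
theorem stereoInv_coe (y : V) : stereoInv (y : OnePoint V) =
    ((‖y‖ ^ 2 - 1) / (‖y‖ ^ 2 + 1), (2 / (‖y‖ ^ 2 + 1)) • y) := rfl

theorem radius_stereoInv (x : OnePoint V) : radius (stereoInv x) = 1 := by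
  rw [radius, Real.sqrt_eq_one]
  induction x using OnePoint.rec with
  | infty => simp
  | coe y =>
    simp only [stereoInv_coe, norm_smul, Real.norm_eq_abs, mul_pow, sq_abs]
    field_simp
    ring

theorem stereoInv_ne_zero (x : OnePoint V) : stereoInv x ≠ 0 := by
  intro h
  simpa [h, radius] using radius_stereoInv x

theorem stereo_stereoInv (x : OnePoint V) : stereo (stereoInv x) = x := by
  rw [stereo, radius_stereoInv]
  induction x using OnePoint.rec with
  | infty => simp
  | coe y =>
    have hsub : 1 - (‖y‖ ^ 2 - 1) / (‖y‖ ^ 2 + 1) = 2 / (‖y‖ ^ 2 + 1) := by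
      field_simp
      ring
    have hpos : 0 < 2 / (‖y‖ ^ 2 + 1) := by positivity
    refine (if_pos (sub_pos.1 (hsub ▸ hpos))).trans ?_
    rw [stereoInv_coe, hsub, inv_smul_smul₀ hpos.ne']

theorem stereoInv_stereo {q : ℝ × V} (hq : q ≠ 0) : stereoInv (stereo q) = (radius q)⁻¹ • q := by
  have hr := radius_pos hq
  have hsq := radius_sq q
  rw [stereo]
  split_ifs with h
  · have hsub : 0 < radius q - q.1 := sub_pos.2 h
    have hnorm : ‖(radius q - q.1)⁻¹ • q.2‖ ^ 2 = (radius q + q.1) / (radius q - q.1) := by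
      rw [norm_smul, Real.norm_of_nonneg (inv_nonneg.2 hsub.le)]
      field_simp
      linarith
    have hden : (radius q + q.1) / (radius q - q.1) + 1 = 2 * radius q / (radius q - q.1) := by
      field_simp
      ring
    rw [stereoInv_coe, hnorm, hden, smul_smul]
    refine Prod.ext ?_ (congrArg (· • q.2) ?_)
    · simp only [Prod.smul_fst, smul_eq_mul]
      field_simp
      ring
    · field_simp
  · have hq2 : q.2 = 0 := by
      rw [← norm_eq_zero, ← pow_eq_zero_iff two_ne_zero]
      nlinarith [sq_nonneg ‖q.2‖]
    have hq1 : q.1 = radius q := by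
      rw [hq2, norm_zero] at hsq
      nlinarith
    refine Prod.ext ?_ (by simp [hq2])
    simp [hq1, hr.ne']

theorem tendsto_stereoInv_cocompact [ProperSpace V] :
    Filter.Tendsto (fun y : V => stereoInv (y : OnePoint V)) (Filter.cocompact V)
      (nhds (1, 0)) := by
  have hnorm := tendsto_norm_cocompact_atTop (E := V)
  have hsq := Filter.tendsto_atTop_add_const_right _ 1 <|
    (Filter.tendsto_pow_atTop two_ne_zero).comp hnorm
  refine Filter.Tendsto.prodMk_nhds ?_ ?_
  · have hlim := (hsq.inv_tendsto_atTop.const_mul 2).const_sub 1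
    rw [mul_zero, sub_zero] at hlim
    refine hlim.congr fun y => ?_
    simp only [Pi.inv_apply, Function.comp_apply]
    field_simp
    ring
  · have hlim := hnorm.inv_tendsto_atTop.const_mul 2
    rw [mul_zero] at hlim
    refine squeeze_zero_norm (fun y => ?_) hlim
    rw [norm_smul, Real.norm_of_nonneg (by positivity)]
    rcases eq_or_ne y 0 with rfl | hy
    · simp
    · have : 0 < ‖y‖ := norm_pos_iff.2 hy
      rw [Pi.inv_apply]
      field_simp
      linarith

theorem continuous_stereoInv [ProperSpace V] : Continuous (stereoInv : OnePoint V → ℝ × V) := by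
  rw [OnePoint.continuous_iff, Filter.coclosedCompact_eq_cocompact]
  refine ⟨tendsto_stereoInv_cocompact, ?_⟩
  simp only [stereoInv_coe]
  fun_prop (disch := intros; positivity)

theorem continuousOn_stereo [ProperSpace V] :
    ContinuousOn (stereo : ℝ × V → OnePoint V) {0}ᶜ := by
  have hemb := continuous_stereoInv.isClosedEmbedding
    (Function.LeftInverse.injective (stereo_stereoInv (V := V)))
  rw [hemb.isInducing.continuousOn_iff]
  exact ((continuous_radius.continuousOn.inv₀ fun q hq => (radius_pos hq).ne').smul
    continuousOn_id).congr fun q hq => stereoInv_stereo hq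

theorem stereoInv_map' (L : V →ₗᵢ[ℝ] W) (x : OnePoint V) :
    stereoInv (map' L x) = ((stereoInv x).1, L (stereoInv x).2) := by
  induction x using OnePoint.rec with
  | infty => exact Prod.ext rfl L.map_zero.symm
  | coe y => simp [map'_coe]

theorem stereo_map (L : V →ₗᵢ[ℝ] W) (q : ℝ × V) :
    stereo (q.1, L q.2) = map' L (stereo q) := by
  have hradius : radius (q.1, L q.2) = radius q := by simp [radius]
  simp only [stereo, hradius]
  split_ifs with h
  · simp [map'_coe]
  · rfl

end Stereographic

/-! ### Extension along a homotopy -/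

section Extension

theorem fst_ne_zero_of_norm_snd_le {X Y : Type*} [NormedAddCommGroup X]
    [NormedAddCommGroup Y] {p : X × Y} (hp : p ≠ 0) (h : ‖p.2‖ ≤ ‖p.1‖) : p.1 ≠ 0 := by
  refine fun hx => hp (Prod.ext hx ?_)
  rwa [hx, norm_zero, norm_le_zero_iff] at h

variable {A V W : Type*} [NormedAddCommGroup A] [NormedAddCommGroup V] [NormedAddCommGroup W]

section ConeCollapse

variable [NormedSpace ℝ V]

/-- The map `(x, v) ↦ (x, (‖v‖ - ‖x‖) v)`, which sends the cone `‖x‖ = ‖v‖` to the fixed vectors of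
the reflection. -/
def coneCollapse (p : (ℝ × A) × V) : ℝ × (A × V) := (p.1.1, p.1.2, (‖p.2‖ - ‖p.1‖) • p.2)

theorem coneCollapse_ne_zero {p : (ℝ × A) × V} (hp : p ≠ 0) : coneCollapse p ≠ 0 := by
  refine fun h => hp ?_
  simp only [coneCollapse, Prod.ext_iff, Prod.fst_zero, Prod.snd_zero] at h
  obtain ⟨ht, ha, hv⟩ := h
  have hx : p.1 = 0 := Prod.ext ht ha
  rw [hx, norm_zero, sub_zero, smul_eq_zero, norm_eq_zero, or_self] at hv
  exact Prod.ext hx hv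

end ConeCollapse

variable [NormedSpace ℝ A] {g₀ g₁ : C(OnePoint A, OnePoint A)} {H : g₀.Homotopy g₁}

/-- The map of nonzero vectors that a homotopy on the fixed sphere induces on the cone
`‖v‖ ≤ ‖x‖`, with its time running from `0` on `‖v‖ = ‖x‖` to `1` on `v = 0`. -/
noncomputable def innerMap (H : g₀.Homotopy g₁) (p : (ℝ × A) × V) : (ℝ × A) × W :=
  (stereoInv (H (Set.projIcc 0 1 zero_le_one (1 - ‖p.2‖ / ‖p.1‖), stereo p.1)), 0)

theorem continuousOn_innerMap [ProperSpace A] :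
    ContinuousOn (innerMap H : (ℝ × A) × V → (ℝ × A) × W) {p | p.1 ≠ 0} := by
  have hstereo : ContinuousOn (fun p : (ℝ × A) × V => stereo p.1) {p | p.1 ≠ 0} :=
    continuousOn_stereo.comp continuous_fst.continuousOn fun p hp => hp
  have htime : ContinuousOn (fun p : (ℝ × A) × V => 1 - ‖p.2‖ / ‖p.1‖) {p | p.1 ≠ 0} :=
    continuousOn_const.sub <| ContinuousOn.div (by fun_prop) (by fun_prop) fun p hp =>
      norm_ne_zero_iff.2 hp
  exact ((continuous_stereoInv.comp H.continuous).comp_continuousOn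
    ((continuous_projIcc.comp_continuousOn htime).prodMk hstereo)).prodMk continuousOn_const

variable [NormedSpace ℝ V] [NormedSpace ℝ W] {f : OnePoint (A × V) → OnePoint (A × W)}

variable (A V) in
/-- The reflection `(a, v) ↦ (a, -v)` of `A × V`. -/
def reflection : A × V →ₗᵢ[ℝ] A × V where
  toLinearMap := LinearMap.prodMap .id (-.id)
  norm_map' q := by simp [Prod.norm_def]

theorem reflection_apply (q : A × V) : reflection A V q = (q.1, -q.2) := rfl

/-- The map of nonzero vectors that `f` induces on the cone `‖x‖ ≤ ‖v‖`. -/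
noncomputable def outerMap (f : OnePoint (A × V) → OnePoint (A × W)) (p : (ℝ × A) × V) :
    (ℝ × A) × W :=
  (ContinuousLinearEquiv.prodAssoc ℝ ℝ A W).symm (stereoInv (f (stereo (coneCollapse p))))

/-- The extension over the nonzero vectors of `(ℝ × A) × V` of the map that `f` induces, with its
restriction to the fixed sphere deformed along the homotopy. -/
noncomputable def homotopyExtension (f : OnePoint (A × V) → OnePoint (A × W))
    (H : g₀.Homotopy g₁) (p : (ℝ × A) × V) : (ℝ × A) × W :=
  if ‖p.1‖ ≤ ‖p.2‖ then outerMap f p else innerMap H p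

theorem homotopyExtension_ne_zero (p : (ℝ × A) × V) : homotopyExtension f H p ≠ 0 := by
  rw [homotopyExtension]
  split_ifs
  · exact (map_ne_zero_iff _ (ContinuousLinearEquiv.injective _)).2 (stereoInv_ne_zero _)
  · exact fun h => stereoInv_ne_zero _ (congrArg Prod.fst h)

theorem continuousOn_outerMap [ProperSpace A] [ProperSpace V] [ProperSpace W] (hf : Continuous f) :
    ContinuousOn (outerMap f) {0}ᶜ := by
  have hcollapse : Continuous (coneCollapse : (ℝ × A) × V → ℝ × (A × V)) := by
    unfold coneCollapse
    fun_prop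
  have hstereo : ContinuousOn (fun p : (ℝ × A) × V => stereo (coneCollapse p)) {0}ᶜ :=
    continuousOn_stereo.comp hcollapse.continuousOn fun p hp => coneCollapse_ne_zero hp
  exact ((ContinuousLinearEquiv.continuous _).comp
    (continuous_stereoInv.comp hf)).comp_continuousOn hstereo

theorem outerMap_eq_innerMap (hrestrict : ∀ p, f (map' (fun x => (x, 0)) p) =
    map' (fun x => (x, 0)) (g₀ p)) {p : (ℝ × A) × V} (hp : p.1 ≠ 0) (h : ‖p.1‖ = ‖p.2‖) :
    outerMap f p = innerMap H p := by
  have hstereo : stereo (coneCollapse p) = map' (fun x => (x, (0 : V))) (stereo p.1) := by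
    rw [coneCollapse, h, sub_self, zero_smul]
    exact stereo_map (.inl ℝ A V) p.1
  have htime : 1 - ‖p.2‖ / ‖p.1‖ = 0 := by
    rw [← h, div_self (norm_ne_zero_iff.2 hp), sub_self]
  have hstereoInv : ∀ y : OnePoint A, stereoInv (map' (fun x => (x, (0 : W))) y) =
      ((stereoInv y).1, (stereoInv y).2, 0) := stereoInv_map' (.inl ℝ A W)
  rw [outerMap, innerMap, hstereo, hrestrict, hstereoInv, htime, Set.projIcc_left]
  exact congrArg (fun y => (stereoInv y, 0)) (H.apply_zero _).symm

theorem continuousOn_homotopyExtension [ProperSpace A] [ProperSpace V] [ProperSpace W]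
    (hf : Continuous f)
    (hrestrict : ∀ p, f (map' (fun x => (x, 0)) p) = map' (fun x => (x, 0)) (g₀ p)) :
    ContinuousOn (homotopyExtension f H) {0}ᶜ := by
  rw [continuousOn_iff_continuous_domRestrict]
  refine continuous_if_le (by fun_prop) (by fun_prop)
    (continuousOn_iff_continuous_domRestrict.1 (continuousOn_outerMap hf)).continuousOn ?_ ?_
  · exact continuousOn_innerMap.comp continuous_subtype_val.continuousOn
      fun p hp => fst_ne_zero_of_norm_snd_le p.2 hp
  · exact fun p hp => outerMap_eq_innerMap hrestrict (fst_ne_zero_of_norm_snd_le p.2 hp.ge) hp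

theorem outerMap_reflection (hequiv : ∀ p, f (map' (fun q => (q.1, -q.2)) p) =
    map' (fun q => (q.1, -q.2)) (f p)) (p : (ℝ × A) × V) :
    outerMap f (p.1, -p.2) = ((outerMap f p).1, -(outerMap f p).2) := by
  have hstereo : stereo (coneCollapse (p.1, -p.2)) =
      map' (fun q => (q.1, -q.2)) (stereo (coneCollapse p)) := by
    refine .trans (congrArg stereo ?_) (stereo_map (reflection A V) (coneCollapse p))
    simp [coneCollapse, reflection_apply]
  have hstereoInv : ∀ y : OnePoint (A × W), stereoInv (map' (fun q => (q.1, -q.2)) y) =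
      ((stereoInv y).1, (stereoInv y).2.1, -(stereoInv y).2.2) := stereoInv_map' (reflection A W)
  rw [outerMap, hstereo, hequiv, hstereoInv]
  rfl

theorem homotopyExtension_reflection (hequiv : ∀ p, f (map' (fun q => (q.1, -q.2)) p) =
    map' (fun q => (q.1, -q.2)) (f p)) (p : (ℝ × A) × V) :
    homotopyExtension f H (p.1, -p.2) =
      ((homotopyExtension f H p).1, -(homotopyExtension f H p).2) := by
  simp only [homotopyExtension, norm_neg]
  split_ifs
  · exact outerMap_reflection hequiv p
  · simp [innerMap]

theorem homotopyExtension_inl {H : g₀.Homotopy (.id _)} {x : ℝ × A} (hx : x ≠ 0) :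
    homotopyExtension f H (x, 0) = ((radius x)⁻¹ • x, 0) := by
  have hnorm : ¬ ‖x‖ ≤ ‖(0 : V)‖ := by simpa using hx
  rw [homotopyExtension, if_neg hnorm, innerMap]
  simp [stereoInv_stereo hx]

theorem homotopyExtension_neg {H : g₀.Homotopy (.id _)} {x : ℝ × A} (hx : x ≠ 0) :
    homotopyExtension f H (-x, 0) = -homotopyExtension f H (x, 0) := by
  simp [homotopyExtension_inl, hx, radius_neg]

end Extension

end RelativeBorsukUlam

open RelativeBorsukUlam in
theorem equivariant_map_fixed_degree_one_dim_ineq_general {A V W : Type*}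
    [NormedAddCommGroup A] [NormedSpace ℝ A] [FiniteDimensional ℝ A]
    [NormedAddCommGroup V] [NormedSpace ℝ V] [FiniteDimensional ℝ V]
    [NormedAddCommGroup W] [NormedSpace ℝ W] [FiniteDimensional ℝ W]
    (f : OnePoint (A × V) → OnePoint (A × W)) (hf : Continuous f)
    (hequiv : ∀ p, f (map' (fun q => (q.1, -q.2)) p) = map' (fun q => (q.1, -q.2)) (f p))
    (g : OnePoint A → OnePoint A) (hg : Continuous g)
    (hrestrict : ∀ p, f (map' (fun x => (x, 0)) p) = map' (fun x => (x, 0)) (g p))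
    (hdeg : ContinuousMap.Homotopic ⟨g, hg⟩ (ContinuousMap.id _)) :
    Module.finrank ℝ V ≤ Module.finrank ℝ W := by
  have := FiniteDimensional.proper_real A
  have := FiniteDimensional.proper_real V
  have := FiniteDimensional.proper_real W
  obtain ⟨H⟩ := hdeg
  by_contra! hlt
  obtain ⟨p, -, hp⟩ := exists_ne_zero_eq_zero_of_finrank_lt hlt
    (continuousOn_homotopyExtension (H := H) hf hrestrict)
    (homotopyExtension_reflection hequiv)
    fun _ => homotopyExtension_neg
  exact homotopyExtension_ne_zero p hp

/-- Let `T = U(1)` act on `ℝⁿ ⊕ ℂᵐ` trivially on `ℝⁿ` and by scalar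
multiplication on `ℂᵐ`, and similarly on `ℝⁿ ⊕ ℂ^m'`.  If a continuous
equivariant map `f : (ℝⁿ ⊕ ℂᵐ)⁺ → (ℝⁿ ⊕ ℂ^m')⁺` restricts on the fixed-point
spheres to a map `g : (ℝⁿ)⁺ → (ℝⁿ)⁺` of degree one (i.e. homotopic to the
identity), then `m ≤ m'` (that is, `k = m' - m ≥ 0`). -/
theorem equivariant_map_fixed_degree_one_dim_ineq
    (n m m' : ℕ)
    (f : OnePoint (EuclideanSpace ℝ (Fin n) × EuclideanSpace ℂ (Fin m)) →
         OnePoint (EuclideanSpace ℝ (Fin n) × EuclideanSpace ℂ (Fin m')))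
    (hf : Continuous f)
    (hequiv : ∀ (z : Circle) p,
      f (OnePoint.map' (fun q => (q.1, (z : ℂ) • q.2)) p) =
        OnePoint.map' (fun q => (q.1, (z : ℂ) • q.2)) (f p))
    (g : OnePoint (EuclideanSpace ℝ (Fin n)) → OnePoint (EuclideanSpace ℝ (Fin n)))
    (hg : Continuous g)
    (hrestrict : ∀ p, f (OnePoint.map' (fun x => (x, 0)) p) =
        OnePoint.map' (fun x => (x, 0)) (g p))
    (hdeg : ContinuousMap.Homotopic ⟨g, hg⟩ (ContinuousMap.id _)) :
    m ≤ m' := by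
  have hle := equivariant_map_fixed_degree_one_dim_ineq_general f hf
    (by simpa using hequiv (Circle.exp Real.pi)) g hg hrestrict hdeg
  simpa [finrank_real_of_complex] using hle
end

section
/- Let Λ be a unimodular negative definite symmetric bilinear form on ℤ^b. If every characteristic vector c of Λ satisfies −Λ(c,c) ≥ b, then Λ is diagonalizable over ℤ, i.e., isomorphic to the standard negative definite diagonal form ⟨−1⟩^b. (Elkies' theorem, used in the paper to deduce Donaldson's theorem.) -/
/-! Elkies compares the theta series of a unimodular lattice `L` of rank `n`, with quadratic form
`Q`, to that of `ℤⁿ`. By Poisson summation `θ_L(τ) = ∑ₓ exp(πi Q(x) τ)` satisfies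
`θ_L(-1/τ) = (-iτ)^(n/2) θ_L(τ)` and has period `2`, while its expansion at the cusp `±1` is the
theta series of the coset `c / 2 + L`, where `c` is a characteristic vector. If characteristic
vectors have norm at least `n`, this coset series is `O(q^(n/8))`, as it is for `ℤⁿ`. Hence
`(θ_L - θ_{ℤⁿ})⁸` has weight `4n` for the theta group `⟨S, T²⟩`, vanishes at `i∞` and is `O(qⁿ)` at
the other cusp. Its norm to `SL(2, ℤ)`, divided by `Δⁿ`, is a level one cusp form of weight zero,
hence zero, and so `θ_L = θ_{ℤⁿ}`. In particular `L` has `2n` vectors of norm one. By positivity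
any two of them that are not opposite are orthogonal, so they form an orthonormal basis up to sign.
-/

open MeasureTheory Set Complex UnitAddTorus Matrix Filter Asymptotics Topology
open ModularGroup
open UpperHalfPlane hiding I
open scoped Real Function MatrixOrder MatrixGroups Manifold ModularForm

section Poisson

theorem exists_unitAddTorus_lift {ι X : Type*} [TopologicalSpace X] {f : (ι → ℝ) → X}
    (hf : Continuous f) (hper : ∀ (x : ι → ℝ) (n : ι → ℤ), f (x + Int.cast ∘ n) = f x) :
    ∃ F : C(UnitAddTorus ι, X), ∀ x : ι → ℝ, F (fun i ↦ x i) = f x := by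
  have quot : IsOpenQuotientMap (Pi.map fun (_ : ι) (x : ℝ) ↦ (x : UnitAddCircle)) :=
    .piMap fun _ ↦ QuotientAddGroup.isOpenQuotientMap_mk
  let q : C(ι → ℝ, UnitAddTorus ι) := ⟨_, quot.continuous⟩
  have fiber (x y : ι → ℝ) (hxy : q x = q y) : f x = f y := by
    choose n hn using fun i ↦ AddSubgroup.mem_zmultiples_iff.mp
      (QuotientAddGroup.eq.mp (congrFun hxy i))
    rw [← hper x n]
    congr 1
    ext i
    simpa using congrArg (x i + ·) (hn i)
  have hq : Topology.IsQuotientMap q := quot.isQuotientMap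
  exact ⟨hq.lift ⟨f, hf⟩ fiber, DFunLike.congr_fun (hq.lift_comp ⟨f, hf⟩ fiber)⟩

variable {ι E : Type*} [Fintype ι] [NormedAddCommGroup E] [NormedSpace ℝ E]

theorem hasSum_setIntegral_unitCube_comp_add {f : (ι → ℝ) → E} (hf : Integrable f) :
    HasSum (fun n : ι → ℤ ↦ ∫ x in {x : ι → ℝ | ∀ i, x i ∈ Ioc 0 1}, f (x + Int.cast ∘ n))
      (∫ x, f x) := by
  let cube (n : ι → ℤ) : Set (ι → ℝ) := univ.pi fun i ↦ Ioc (n i : ℝ) (n i + 1)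
  have cube_meas (n : ι → ℤ) : MeasurableSet (cube n) :=
    .univ_pi fun _ ↦ measurableSet_Ioc
  have cube_disjoint : Pairwise (Disjoint on cube) := fun m n hmn ↦ by
    obtain ⟨i, hi⟩ := Function.ne_iff.mp hmn
    exact disjoint_univ_pi.mpr ⟨i, pairwise_disjoint_Ioc_intCast ℝ hi⟩
  have iUnion_cube : ⋃ n, cube n = univ := by
    simp only [cube, iUnion_univ_pi fun (_ : ι) (n : ℤ) ↦ Ioc (n : ℝ) (n + 1),
      iUnion_Ioc_intCast, pi_univ]
  have integral_cube (n : ι → ℤ) : ∫ x in cube n, f x =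
      ∫ x in {x : ι → ℝ | ∀ i, x i ∈ Ioc 0 1}, f (x + Int.cast ∘ n) := by
    rw [← (measurePreserving_add_right volume (Int.cast ∘ n)).setIntegral_preimage_emb
      (measurableEmbedding_addRight _)]
    congr! 2
    ext x
    simp [cube, add_comm (x _), -Int.cast_add]
  simpa only [iUnion_cube, integral_cube, setIntegral_univ] using
    hasSum_integral_iUnion cube_meas cube_disjoint hf.integrableOn

theorem integral_eq_setIntegral_unitCube_tsum {f : (ι → ℝ) → E} (hf : Integrable f) :
    ∫ x, f x = ∫ x in {x : ι → ℝ | ∀ i, x i ∈ Ioc 0 1}, ∑' n : ι → ℤ, f (x + Int.cast ∘ n) := by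
  rw [← (hasSum_setIntegral_unitCube_comp_add hf).tsum_eq]
  exact integral_tsum_of_summable_integral_norm
    (fun n ↦ (hf.comp_add_right (Int.cast ∘ n)).integrableOn)
    (hasSum_setIntegral_unitCube_comp_add hf.norm).summable

theorem mFourier_coe_add_intCast (m n : ι → ℤ) (x : ι → ℝ) :
    mFourier m (fun i ↦ ((x i + n i : ℝ) : UnitAddCircle)) =
      mFourier m (fun i ↦ (x i : UnitAddCircle)) := by
  congr 1
  ext i
  rw [AddCircle.coe_add, add_eq_left, AddCircle.coe_eq_zero_iff]
  exact ⟨n i, by simp⟩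

theorem norm_mFourier_apply (m : ι → ℤ) (x : UnitAddTorus ι) : ‖mFourier m x‖ = 1 := by
  simp only [mFourier, ContinuousMap.coe_mk, norm_prod, fourier_apply, Circle.norm_coe,
    Finset.prod_const_one]

theorem mFourier_coe (m : ι → ℤ) (x : ι → ℝ) :
    mFourier m (fun i ↦ (x i : UnitAddCircle)) = cexp (2 * π * I * ∑ i, m i * x i) := by
  simp [mFourier, ← Complex.exp_sum, Finset.mul_sum, mul_assoc]

theorem mFourierCoeff_of_periodization {f : (ι → ℝ) → ℂ} (hf : Integrable f)
    {F : UnitAddTorus ι → ℂ}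
    (hF : ∀ x : ι → ℝ, F (fun i ↦ x i) = ∑' n : ι → ℤ, f (x + Int.cast ∘ n)) (m : ι → ℤ) :
    mFourierCoeff F m = ∫ x : ι → ℝ, mFourier (-m) (fun i ↦ (x i : UnitAddCircle)) * f x := by
  have mFourier_cont : Continuous fun x : ι → ℝ ↦ mFourier (-m) fun i ↦ (x i : UnitAddCircle) := by
    simp only [mFourier_coe]
    fun_prop
  have integrable :
      Integrable fun x : ι → ℝ ↦ mFourier (-m) (fun i ↦ (x i : UnitAddCircle)) * f x :=
    hf.bdd_mul mFourier_cont.aestronglyMeasurable (c := 1)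
      (.of_forall fun x ↦ (norm_mFourier_apply _ _).le)
  rw [mFourierCoeff_eq_integral F m 0, integral_eq_setIntegral_unitCube_tsum integrable]
  simp only [hF, Pi.add_apply, Function.comp_apply, mFourier_coe_add_intCast, smul_eq_mul,
    tsum_mul_left, Pi.zero_apply, zero_add]

theorem tsum_comp_add_eq_tsum_mFourier {f : (ι → ℝ) → ℂ} (hf : Integrable f)
    (hcont : Continuous fun x ↦ ∑' n : ι → ℤ, f (x + Int.cast ∘ n))
    (hsum : Summable fun m : ι → ℤ ↦
      ∫ x : ι → ℝ, mFourier (-m) (fun i ↦ (x i : UnitAddCircle)) * f x) (x : ι → ℝ) :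
    ∑' n : ι → ℤ, f (x + Int.cast ∘ n) = ∑' m : ι → ℤ,
      (∫ y : ι → ℝ, mFourier (-m) (fun i ↦ (y i : UnitAddCircle)) * f y) *
        mFourier m (fun i ↦ (x i : UnitAddCircle)) := by
  obtain ⟨F, hF⟩ := exists_unitAddTorus_lift hcont fun x k ↦ by
    rw [← (Equiv.addLeft k).tsum_eq fun n : ι → ℤ ↦ f (x + Int.cast ∘ n)]
    congr! 3 with n
    ext i
    simp [add_assoc]
  have coeff := funext (mFourierCoeff_of_periodization hf hF)
  rw [← coeff] at hsum
  simpa only [hF, coeff, smul_eq_mul] using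
    (hasSum_mFourier_series_apply_of_summable hsum fun i ↦ x i).tsum_eq.symm

end Poisson

section Gaussian

variable {ι : Type*} [Fintype ι]

theorem exists_isUnit_det_eq_transpose_mul_self [DecidableEq ι] {A : Matrix ι ι ℝ} (hA : A.PosDef) :
    ∃ B : Matrix ι ι ℝ, IsUnit B.det ∧ A = Bᵀ * B := by
  obtain ⟨B, rfl⟩ := CStarAlgebra.nonneg_iff_eq_star_mul_self.mp hA.posSemidef.nonneg
  refine ⟨B, ?_, by rw [star_eq_conjTranspose, conjTranspose_eq_transpose_of_trivial]⟩
  exact isUnit_of_mul_isUnit_right (x := (star B).det) (det_mul (star B) B ▸ hA.det_pos.ne'.isUnit)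

theorem exists_pos_mul_dotProduct_le {A : Matrix ι ι ℝ} (hA : A.PosDef) :
    ∃ ε > 0, ∀ x, ε * (x ⬝ᵥ x) ≤ x ⬝ᵥ A *ᵥ x := by
  classical
  cases isEmpty_or_nonempty ι
  · exact ⟨1, one_pos, by simp [dotProduct]⟩
  obtain ⟨ε, hε, hle⟩ := (CFC.exists_pos_algebraMap_le_iff hA.isHermitian).mpr fun _ h ↦
    hA.isStrictlyPositive.spectrum_pos h
  refine ⟨ε, hε, fun x ↦ ?_⟩
  simpa [sub_mulVec, Algebra.algebraMap_eq_smul_one, smul_mulVec] using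
    (Matrix.le_iff.mp hle).dotProduct_mulVec_nonneg x

theorem integral_comp_mulVec [DecidableEq ι] {E : Type*} [NormedAddCommGroup E] [NormedSpace ℝ E]
    {B : Matrix ι ι ℝ} (hB : IsUnit B.det) (f : (ι → ℝ) → E) :
    ∫ x, f (B *ᵥ x) = |B.det|⁻¹ • ∫ x, f x := by
  have hemb : MeasurableEmbedding (toLin' B) :=
    (toLin' B).continuous_of_finiteDimensional.measurableEmbedding
      (mulVec_injective_of_isUnit ((isUnit_iff_isUnit_det B).mpr hB))
  simp_rw [← toLin'_apply]
  rw [← hemb.integral_map, Real.map_matrix_volume_pi_eq_smul_volume_pi hB.ne_zero,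
    integral_smul_measure, abs_inv, ENNReal.toReal_ofReal (by positivity)]

theorem integral_cexp_neg_mul_dotProduct_self {z : ℂ} (hz : 0 < z.re) (w : ι → ℝ) :
    ∫ x, cexp (-(2 * π * I * (w ⬝ᵥ x : ℝ))) * cexp (-π * z * (x ⬝ᵥ x : ℝ)) =
      (z ^ (1 / 2 : ℂ))⁻¹ ^ Fintype.card ι * cexp (-π / z * (w ⬝ᵥ w : ℝ)) := by
  have hz0 : z ≠ 0 := fun h ↦ by simp [h] at hz
  have gaussian (x : ι → ℝ) :
      cexp (-(2 * π * I * (w ⬝ᵥ x : ℝ))) * cexp (-π * z * (x ⬝ᵥ x : ℝ)) =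
        cexp (-(π * z) * ∑ i, (x i : ℂ) ^ 2 + ∑ i, -(2 * π * I * w i) * x i) := by
    rw [← Complex.exp_add]
    simp only [dotProduct, ofReal_sum, ofReal_mul, neg_mul, Finset.sum_neg_distrib,
      Finset.mul_sum, sq, mul_assoc]
    ring_nf
  have power : (π / (π * z)) ^ (Fintype.card ι / 2 : ℂ) =
      (z ^ (1 / 2 : ℂ))⁻¹ ^ Fintype.card ι := by
    have harg : z.arg ≠ π := slitPlane_arg_ne_pi (.inl hz)
    rw [div_mul_cancel_left₀ (ofReal_ne_zero.mpr Real.pi_ne_zero), inv_cpow _ _ harg, inv_pow,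
      ← cpow_nat_mul, mul_one_div]
  have exponent : (∑ i, (-(2 * π * I * w i)) ^ 2) / (4 * (π * z)) =
      -π / z * (w ⬝ᵥ w : ℝ) := by
    simp only [dotProduct, ofReal_sum, ofReal_mul, Finset.mul_sum, Finset.sum_div]
    refine Finset.sum_congr rfl fun i _ ↦ ?_
    field_simp
    ring_nf
    simp
  simp only [gaussian]
  rw [GaussianFourier.integral_cexp_neg_mul_sum_add (by simpa using mul_pos Real.pi_pos hz),
    power, exponent]

theorem integral_cexp_neg_mul_dotProduct_mulVec [DecidableEq ι] {A : Matrix ι ι ℝ}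
    (hA : A.PosDef) {z : ℂ} (hz : 0 < z.re) (w : ι → ℝ) :
    ∫ x, cexp (-(2 * π * I * (w ⬝ᵥ x : ℝ))) * cexp (-π * z * (x ⬝ᵥ A *ᵥ x : ℝ)) =
      (z ^ (1 / 2 : ℂ))⁻¹ ^ Fintype.card ι / √A.det * cexp (-π / z * (w ⬝ᵥ A⁻¹ *ᵥ w : ℝ)) := by
  obtain ⟨B, hB, rfl⟩ := exists_isUnit_det_eq_transpose_mul_self hA
  let c : ι → ℝ := w ᵥ* B⁻¹
  have form (x : ι → ℝ) : x ⬝ᵥ (Bᵀ * B) *ᵥ x = B *ᵥ x ⬝ᵥ B *ᵥ x := by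
    rw [← mulVec_mulVec, dotProduct_mulVec, vecMul_transpose]
  have linear (x : ι → ℝ) : w ⬝ᵥ x = c ⬝ᵥ B *ᵥ x := by
    rw [dotProduct_mulVec, vecMul_vecMul, nonsing_inv_mul B hB, vecMul_one]
  have dual : w ⬝ᵥ (Bᵀ * B)⁻¹ *ᵥ w = c ⬝ᵥ c := by
    rw [Matrix.mul_inv_rev, ← mulVec_mulVec, dotProduct_mulVec, ← transpose_nonsing_inv,
      mulVec_transpose]
  have sqrt_det : √(Bᵀ * B).det = |B.det| := by
    rw [det_mul, det_transpose, Real.sqrt_mul_self_eq_abs]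
  rw [dual, sqrt_det]
  simp only [form, linear]
  rw [integral_comp_mulVec hB fun y ↦ cexp (-(2 * π * I * (c ⬝ᵥ y : ℝ))) *
    cexp (-π * z * (y ⬝ᵥ y : ℝ)), integral_cexp_neg_mul_dotProduct_self hz, real_smul, ofReal_inv]
  ring

end Gaussian

section Summability

variable {ι : Type*} [Fintype ι]

theorem summable_prod_apply {α : ι → Type*} {f : ∀ i, α i → ℝ} (hf₀ : ∀ i a, 0 ≤ f i a)
    (hf : ∀ i, Summable (f i)) : Summable fun x : ∀ i, α i ↦ ∏ i, f i (x i) := by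
  classical
  refine summable_of_sum_le (c := ∏ i, ∑' a, f i a) (fun x ↦ Finset.prod_nonneg fun i _ ↦ hf₀ i _)
    fun s ↦ ?_
  calc ∑ x ∈ s, ∏ i, f i (x i)
      ≤ ∑ x ∈ Fintype.piFinset fun i ↦ s.image (· i), ∏ i, f i (x i) :=
        Finset.sum_le_sum_of_subset_of_nonneg
          (fun x hx ↦ Fintype.mem_piFinset.mpr fun i ↦ Finset.mem_image_of_mem _ hx)
          fun x _ _ ↦ Finset.prod_nonneg fun i _ ↦ hf₀ i _
    _ = ∏ i, ∑ a ∈ s.image (· i), f i a := (Finset.prod_univ_sum _ _).symm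
    _ ≤ ∏ i, ∑' a, f i a := Finset.prod_le_prod (fun i _ ↦ Finset.sum_nonneg fun a _ ↦ hf₀ i a)
        fun i _ ↦ (hf i).sum_le_tsum _ fun a _ ↦ hf₀ i a

theorem summable_exp_neg_mul_sum_sq {t : ℝ} (ht : 0 < t) :
    Summable fun n : ι → ℤ ↦ rexp (-t * ∑ i, (n i : ℝ) ^ 2) := by
  have one_dim : Summable fun k : ℤ ↦ rexp (-t * (k : ℝ) ^ 2) := by
    have him : 0 < (I * (t / π : ℝ)).im := by simpa using div_pos ht Real.pi_pos
    refine ((summable_jacobiTheta₂_term_iff 0 _).mpr him).norm.congr fun k ↦ ?_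
    rw [norm_jacobiTheta₂_term]
    simp [field]
  simpa only [Finset.mul_sum, Real.exp_sum] using
    summable_prod_apply (fun _ _ ↦ (Real.exp_pos _).le) fun _ : ι ↦ one_dim

theorem exists_summable_bound_exp_neg_mul {A : Matrix ι ι ℝ} (hA : A.PosDef) {t : ℝ} (ht : 0 < t)
    (R : ℝ) : ∃ u : (ι → ℤ) → ℝ, Summable u ∧ ∀ (v : ι → ℝ) (n : ι → ℤ), v ⬝ᵥ v ≤ R →
      rexp (-t * ((v + Int.cast ∘ n) ⬝ᵥ A *ᵥ (v + Int.cast ∘ n))) ≤ u n := by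
  obtain ⟨ε, hε, hle⟩ := exists_pos_mul_dotProduct_le hA
  refine ⟨fun n ↦ rexp (t * ε * R) * rexp (-(t * ε / 2) * ∑ i, (n i : ℝ) ^ 2),
    (summable_exp_neg_mul_sum_sq (by positivity)).mul_left _, fun v n hv ↦ ?_⟩
  have half : (∑ i, (n i : ℝ) ^ 2) / 2 - v ⬝ᵥ v ≤ (v + Int.cast ∘ n) ⬝ᵥ (v + Int.cast ∘ n) := by
    simp only [dotProduct, Finset.sum_div, ← Finset.sum_sub_distrib]
    refine Finset.sum_le_sum fun i _ ↦ ?_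
    simp only [Pi.add_apply, Function.comp_apply]
    nlinarith [sq_nonneg ((n i : ℝ) + 2 * v i)]
  simp only [← Real.exp_add, Real.exp_le_exp]
  have coercive := mul_le_mul_of_nonneg_left (hle (v + Int.cast ∘ n)) ht.le
  have scaled_half := mul_le_mul_of_nonneg_left half (mul_pos ht hε).le
  have scaled_bound := mul_le_mul_of_nonneg_left hv (mul_pos ht hε).le
  linarith

theorem norm_cexp_neg_pi_mul (z : ℂ) (r : ℝ) :
    ‖cexp (-π * z * r)‖ = rexp (-(π * z.re) * r) := by
  simp [Complex.norm_exp]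

theorem continuous_tsum_cexp_neg_mul {A : Matrix ι ι ℝ} (hA : A.PosDef) {z : ℂ} (hz : 0 < z.re) :
    Continuous fun v : ι → ℝ ↦ ∑' n : ι → ℤ,
      cexp (-π * z * ((v + Int.cast ∘ n) ⬝ᵥ A *ᵥ (v + Int.cast ∘ n) : ℝ)) := by
  refine continuous_iff_continuousAt.mpr fun v ↦ ?_
  obtain ⟨u, hu, hle⟩ := exists_summable_bound_exp_neg_mul hA (mul_pos Real.pi_pos hz) (v ⬝ᵥ v + 1)
  have nhds : {w : ι → ℝ | w ⬝ᵥ w < v ⬝ᵥ v + 1} ∈ nhds v :=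
    (isOpen_lt (by fun_prop) continuous_const).mem_nhds (lt_add_one (v ⬝ᵥ v))
  refine (continuousOn_tsum (fun n ↦ Continuous.continuousOn (by fun_prop)) hu
    fun n w hw ↦ ?_).continuousAt nhds
  rw [norm_cexp_neg_pi_mul]
  exact hle w n hw.le

theorem summable_exp_neg_mul {A : Matrix ι ι ℝ} (hA : A.PosDef) {t : ℝ} (ht : 0 < t) (v : ι → ℝ) :
    Summable fun n : ι → ℤ ↦ rexp (-t * ((v + Int.cast ∘ n) ⬝ᵥ A *ᵥ (v + Int.cast ∘ n))) := by
  obtain ⟨u, hu, hle⟩ := exists_summable_bound_exp_neg_mul hA ht (v ⬝ᵥ v)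
  exact hu.of_nonneg_of_le (fun _ ↦ (Real.exp_pos _).le) fun n ↦ hle v n le_rfl

theorem integrable_cexp_neg_mul {A : Matrix ι ι ℝ} (hA : A.PosDef) {z : ℂ} (hz : 0 < z.re) :
    Integrable fun x : ι → ℝ ↦ cexp (-π * z * (x ⬝ᵥ A *ᵥ x : ℝ)) := by
  obtain ⟨ε, hε, hle⟩ := exists_pos_mul_dotProduct_le hA
  have hb : 0 < ((π * z.re * ε : ℝ) : ℂ).re := by simpa using by positivity
  refine (GaussianFourier.integrable_cexp_neg_mul_sum_add hb 0).mono
    (Continuous.aestronglyMeasurable (by fun_prop)) (.of_forall fun x ↦ ?_)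
  have gaussian : cexp (-(π * z.re * ε : ℝ) * ∑ i, (x i : ℂ) ^ 2 + ∑ i, (0 : ι → ℂ) i * x i) =
      (rexp (-(π * z.re) * (ε * (x ⬝ᵥ x))) : ℝ) := by
    simp [dotProduct, sq, mul_assoc]
  rw [norm_cexp_neg_pi_mul, gaussian, norm_real, Real.norm_eq_abs, Real.abs_exp, Real.exp_le_exp]
  exact mul_le_mul_of_nonpos_left (hle x) (by simpa using by positivity)

theorem tsum_cexp_neg_mul_eq [DecidableEq ι] {A : Matrix ι ι ℝ} (hA : A.PosDef) {z : ℂ}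
    (hz : 0 < z.re) (v : ι → ℝ) :
    ∑' n : ι → ℤ, cexp (-π * z * ((v + Int.cast ∘ n) ⬝ᵥ A *ᵥ (v + Int.cast ∘ n) : ℝ)) =
      (z ^ (1 / 2 : ℂ))⁻¹ ^ Fintype.card ι / √A.det *
        ∑' m : ι → ℤ, cexp (-π / z * ((Int.cast ∘ m) ⬝ᵥ A⁻¹ *ᵥ (Int.cast ∘ m) : ℝ)) *
          cexp (2 * π * I * ((Int.cast ∘ m) ⬝ᵥ v : ℝ)) := by
  have mFourier_eq (m : ι → ℤ) (x : ι → ℝ) : mFourier m (fun i ↦ (x i : UnitAddCircle)) =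
      cexp (2 * π * I * ((Int.cast ∘ m) ⬝ᵥ x : ℝ)) := by
    simp [mFourier_coe, dotProduct]
  have coeff (m : ι → ℤ) : ∫ x : ι → ℝ, mFourier (-m) (fun i ↦ (x i : UnitAddCircle)) *
      cexp (-π * z * (x ⬝ᵥ A *ᵥ x : ℝ)) =
        (z ^ (1 / 2 : ℂ))⁻¹ ^ Fintype.card ι / √A.det *
          cexp (-π / z * ((Int.cast ∘ m) ⬝ᵥ A⁻¹ *ᵥ (Int.cast ∘ m) : ℝ)) := by
    rw [← integral_cexp_neg_mul_dotProduct_mulVec hA hz]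
    simp [mFourier_coe, dotProduct]
  have inv_re : 0 < z⁻¹.re := by
    rw [inv_re]
    exact div_pos hz (normSq_pos.mpr fun h ↦ by simp [h] at hz)
  have summable : Summable fun m : ι → ℤ ↦
      cexp (-π / z * ((Int.cast ∘ m) ⬝ᵥ A⁻¹ *ᵥ (Int.cast ∘ m) : ℝ)) := by
    refine .of_norm ((summable_exp_neg_mul hA.inv (mul_pos Real.pi_pos inv_re) 0).congr fun m ↦ ?_)
    rw [div_eq_mul_inv, norm_cexp_neg_pi_mul, zero_add]
  rw [tsum_comp_add_eq_tsum_mFourier (integrable_cexp_neg_mul hA hz)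
    (continuous_tsum_cexp_neg_mul hA hz) (by simpa only [coeff] using summable.mul_left _) v,
    ← tsum_mul_left]
  simp_rw [coeff, mFourier_eq, mul_assoc]

end Summability

section ThetaSeries

/-- The theta series `∑ₓ exp(πi q(x) τ)` of a real-valued function `q`, in practice a quadratic
form restricted to a translate of a lattice. -/
noncomputable def thetaSeries {X : Type*} (q : X → ℝ) (τ : ℍ) : ℂ :=
  ∑' x, cexp (π * I * τ * q x)

variable {X : Type*} {q : X → ℝ}

theorem norm_cexp_pi_mul_I_mul (z : ℂ) (r : ℝ) :
    ‖cexp (π * I * z * r)‖ = rexp (-(π * z.im) * r) := by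
  simp [Complex.norm_exp]

theorem summable_cexp_pi_mul_I_mul (hq : ∀ t > 0, Summable fun x ↦ rexp (-t * q x)) (τ : ℍ) :
    Summable fun x ↦ cexp (π * I * τ * q x) :=
  .of_norm <| by
    simpa only [norm_cexp_pi_mul_I_mul, coe_im] using hq _ (mul_pos Real.pi_pos τ.im_pos)

theorem mdifferentiable_thetaSeries (hq₀ : ∀ x, 0 ≤ q x)
    (hq : ∀ t > 0, Summable fun x ↦ rexp (-t * q x)) : MDiff (thetaSeries q) := by
  have differentiableAt {z : ℂ} (hz : 0 < z.im) :
      DifferentiableAt ℂ (fun w ↦ ∑' x, cexp (π * I * w * q x)) z := by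
    have isOpen : IsOpen {w : ℂ | z.im / 2 < w.im} := isOpen_lt continuous_const continuous_im
    refine (differentiableOn_tsum_of_summable_norm (hq (π * (z.im / 2)) (by positivity))
      (fun x ↦ by fun_prop) isOpen fun x w (hw : z.im / 2 < w.im) ↦ ?_).differentiableAt
      (isOpen.mem_nhds (half_lt_self hz))
    rw [norm_cexp_pi_mul_I_mul, Real.exp_le_exp]
    exact mul_le_mul_of_nonneg_right
      (neg_le_neg (mul_le_mul_of_nonneg_left hw.le Real.pi_pos.le)) (hq₀ x)
  refine mdifferentiable_iff.mpr fun z hz ↦ ?_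
  refine (differentiableAt hz).differentiableWithinAt.congr (fun w (hw : 0 < w.im) ↦ ?_) ?_
  · simp [thetaSeries, ofComplex_apply_of_im_pos hw]
  · simp [thetaSeries, ofComplex_apply_of_im_pos hz]

theorem thetaSeries_isBigO {m : ℝ} (hm : ∀ x, m ≤ q x) (hq : Summable fun x ↦ rexp (-π * q x)) :
    thetaSeries q =O[atImInfty] fun τ ↦ rexp (-π * m * τ.im) := by
  refine .of_bound (∑' x, rexp (π * m) * rexp (-π * q x)) ?_
  filter_upwards [tendsto_comap.eventually_ge_atTop 1] with τ hτ
  rw [Real.norm_eq_abs, Real.abs_exp, ← tsum_mul_right]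
  refine tsum_of_norm_bounded ((hq.mul_left _).mul_right _).hasSum fun x ↦ ?_
  rw [norm_cexp_pi_mul_I_mul, ← Real.exp_add, ← Real.exp_add, Real.exp_le_exp, coe_im]
  nlinarith [mul_nonneg (mul_nonneg Real.pi_pos.le (sub_nonneg.mpr hτ)) (sub_nonneg.mpr (hm x))]

theorem tendsto_cexp_pi_mul_I_mul_atImInfty {r : ℝ} (hr : 0 < r) :
    Tendsto (fun τ : ℍ ↦ cexp (π * I * τ * r)) atImInfty (𝓝 0) := by
  rw [tendsto_zero_iff_norm_tendsto_zero]
  simp only [norm_cexp_pi_mul_I_mul, coe_im]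
  have im : Tendsto UpperHalfPlane.im atImInfty atTop := tendsto_comap
  refine Real.tendsto_exp_atBot.comp ?_
  simpa using! (im.const_mul_atTop Real.pi_pos).atTop_mul_const hr

theorem tendsto_thetaSeries_atImInfty (hq₀ : ∀ x, 0 ≤ q x)
    (hq : Summable fun x ↦ rexp (-π * q x)) :
    Tendsto (thetaSeries q) atImInfty (𝓝 (Nat.card {x // q x = 0} : ℂ)) := by
  have term (x : X) : Tendsto (fun τ : ℍ ↦ cexp (π * I * τ * q x)) atImInfty
      (𝓝 ({x | q x = 0}.indicator 1 x)) := by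
    rcases (hq₀ x).eq_or_lt' with h | h
    · simp [h]
    · rw [Set.indicator_of_notMem (by simpa using h.ne')]
      exact tendsto_cexp_pi_mul_I_mul_atImInfty h
  have card : ∑' x, {x | q x = 0}.indicator (1 : X → ℂ) x = Nat.card {x // q x = 0} := by
    rw [← tsum_subtype]
    simpa only [Pi.one_apply, nsmul_eq_mul, mul_one] using!
      tsum_const (β := {x // q x = 0}) (1 : ℂ)
  rw [← card]
  refine tendsto_tsum_of_dominated_convergence hq term ?_
  filter_upwards [tendsto_comap.eventually_ge_atTop 1] with τ hτ x
  rw [norm_cexp_pi_mul_I_mul, Real.exp_le_exp, coe_im]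
  nlinarith [mul_nonneg (mul_nonneg Real.pi_pos.le (sub_nonneg.mpr hτ)) (hq₀ x)]

end ThetaSeries

section Modular

local notation "Δ" => ModularForm.discriminant

theorem slash_neg_of_even {k : ℤ} (hk : Even k) (f : ℍ → ℂ) (A : SL(2, ℤ)) :
    f ∣[k] (-A) = f ∣[k] A := by
  ext τ
  rw [ModularForm.SL_slash_apply, ModularForm.SL_slash_apply, SL_neg_smul,
    ModularGroup.denom_apply, ModularGroup.denom_apply]
  simp [← neg_add, hk.neg_zpow, -neg_add_rev]

theorem pow_slash_SL2 (k : ℤ) (n : ℕ) (f : ℍ → ℂ) (A : SL(2, ℤ)) :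
    (f ^ n) ∣[n * k] A = (f ∣[k] A) ^ n := by
  ext τ
  simp only [ModularForm.SL_slash_apply, Pi.pow_apply, ← zpow_natCast, ← _root_.zpow_mul,
    mul_zpow]
  ring_nf

theorem eq_zero_of_isLittleO_discriminant_pow {n : ℕ} {f : ℍ → ℂ} (hf : MDiff f)
    (hS : f ∣[(n * 12 : ℤ)] S = f) (hT : f ∣[(n * 12 : ℤ)] T = f)
    (ho : f =o[atImInfty] (Δ ^ n)) : f = 0 := by
  have pow_ne_zero (τ : ℍ) : (Δ ^ n) τ ≠ 0 := pow_ne_zero n (ModularForm.discriminant_ne_zero τ)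
  have invariant (A : SL(2, ℤ)) : (f / Δ ^ n) ∣[(0 : ℤ)] A = f / Δ ^ n :=
    SlashInvariantForm.slash_action_generators_SL2Z
      (by rw [← sub_self (n * 12 : ℤ), ModularForm.div_slash_SL2, pow_slash_SL2, hS,
        ModularForm.discriminant_S_invariant])
      (by rw [← sub_self (n * 12 : ℤ), ModularForm.div_slash_SL2, pow_slash_SL2, hT,
        ModularForm.discriminant_T_invariant]) A
  let quotient : CuspForm 𝒮ℒ 0 :=
    { toFun := f / Δ ^ n
      slash_action_eq' := fun _ ⟨A, hA⟩ ↦ hA ▸ invariant A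
      holo' := hf.div (CuspForm.discriminant.holo'.pow n) pow_ne_zero
      zero_at_cusps' := fun hc ↦ by
        rw [Subgroup.IsArithmetic.isCusp_iff_isCusp_SL2Z] at hc
        rw [OnePoint.isZeroAt_iff_forall_SL2Z hc]
        exact fun A _ ↦ (invariant A).symm ▸ ho.tendsto_div_nhds_zero }
  have quotient_eq_zero : quotient = 0 :=
    rank_zero_iff_forall_zero.mp (CuspForm.rank_eq_zero_of_weight_lt_twelve (by norm_num)) _
  ext τ
  exact (div_eq_zero_iff.mp (DFunLike.congr_fun quotient_eq_zero τ)).resolve_right (pow_ne_zero τ)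

/-- The norm to level one of a function invariant under the theta group `⟨S, T²⟩`: the product of
its slash translates over the three cosets of that group in `SL(2, ℤ)`. -/
noncomputable def thetaNorm (k : ℤ) (f : ℍ → ℂ) : ℍ → ℂ :=
  f * f ∣[k] T * f ∣[k] (T * S)

variable {k : ℤ} {f : ℍ → ℂ}

theorem mdifferentiable_slash_SL2 (hf : MDiff f) (A : SL(2, ℤ)) : MDiff (f ∣[k] A) :=
  hf.slash k A

theorem thetaNorm_slash (A : SL(2, ℤ)) : thetaNorm k f ∣[k + k + k] A =
    f ∣[k] A * f ∣[k] (T * A) * f ∣[k] (T * S * A) := by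
  rw [thetaNorm, ModularForm.mul_slash_SL2, ModularForm.mul_slash_SL2, SlashAction.slash_mul _ T A,
    SlashAction.slash_mul _ (T * S) A]

theorem thetaNorm_slash_S (hk : Even k) (hS : f ∣[k] S = f) :
    thetaNorm k f ∣[k + k + k] S = thetaNorm k f := by
  rw [thetaNorm_slash, hS, show T * S * S = -T by decide, slash_neg_of_even hk, mul_right_comm,
    thetaNorm]

theorem thetaNorm_slash_T (hS : f ∣[k] S = f) (hT : f ∣[k] (T ^ 2) = f) :
    thetaNorm k f ∣[k + k + k] T = thetaNorm k f := by
  have slash_T_S_T : f ∣[k] (T * S * T) = f ∣[k] (T * S) := by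
    conv_rhs => rw [show T * S = T ^ 2 * (S * (T * S * T)) by decide, SlashAction.slash_mul, hT,
      SlashAction.slash_mul, hS]
  rw [thetaNorm_slash, slash_T_S_T, ← sq, hT, mul_comm (f ∣[k] T), thetaNorm]

theorem thetaNorm_eq_zero_iff (hf : MDiff f) : thetaNorm k f = 0 ↔ f = 0 := by
  rw [thetaNorm,
    mul_eq_zero_iff (hf.mul (mdifferentiable_slash_SL2 hf _)) (mdifferentiable_slash_SL2 hf _),
    mul_eq_zero_iff hf (mdifferentiable_slash_SL2 hf _)]
  simp only [SlashAction.slash_eq_zero_iff, or_self]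

theorem eq_zero_of_slash_S_of_slash_T_sq {n : ℕ} (hf : MDiff f)
    (hS : f ∣[(4 * n : ℤ)] S = f) (hT : f ∣[(4 * n : ℤ)] (T ^ 2) = f) (h0 : IsZeroAtImInfty f)
    (hO : (f ∣[(4 * n : ℤ)] (T * S)) =O[atImInfty] fun τ ↦ rexp (-2 * π * n * τ.im)) :
    f = 0 := by
  rw [← thetaNorm_eq_zero_iff hf (k := 4 * n)]
  have weight : (n * 12 : ℤ) = 4 * n + 4 * n + 4 * n := by ring
  have slash_T : IsZeroAtImInfty (f ∣[(4 * n : ℤ)] T) :=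
    IsZeroAtImInfty.slash (4 * n : ℤ) (g := T) (by simp [coe_T]) h0
  have small : (f * f ∣[(4 * n : ℤ)] T) =o[atImInfty] (1 : ℍ → ℂ) :=
    (isLittleO_one_iff ℂ).mpr (mul_zero (0 : ℂ) ▸ Tendsto.mul h0 slash_T)
  have bounded : (f ∣[(4 * n : ℤ)] (T * S)) =O[atImInfty] (Δ ^ n) :=
    hO.trans <| (ModularForm.exp_isBigO_discriminant.pow n).congr_left fun τ ↦ by
      rw [← Real.exp_nat_mul]
      ring_nf
  refine eq_zero_of_isLittleO_discriminant_pow (n := n)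
    ((hf.mul (mdifferentiable_slash_SL2 hf T)).mul (mdifferentiable_slash_SL2 hf (T * S))) ?_ ?_ ?_
  · rw [weight, thetaNorm_slash_S ⟨2 * n, by ring⟩ hS]
  · rw [weight, thetaNorm_slash_T hS hT]
  · exact (small.mul_isBigO bounded).congr_right fun _ ↦ one_mul _

end Modular

section LatticeTheta

variable {ι : Type*} [Fintype ι] {G : Matrix ι ι ℤ}

theorem intCast_dotProduct_mulVec (G : Matrix ι ι ℤ) (x y : ι → ℤ) :
    ((x ⬝ᵥ G *ᵥ y : ℤ) : ℝ) = (Int.cast ∘ x) ⬝ᵥ G.map Int.cast *ᵥ (Int.cast ∘ y) := by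
  simp [dotProduct, mulVec]

theorem tendsto_intFloor_mul_div_atTop (a : ℝ) :
    Tendsto (fun N : ℕ ↦ (⌊a * N⌋ : ℝ) / N) atTop (𝓝 a) := by
  have lower : Tendsto (fun N : ℕ ↦ a - 1 / (N : ℝ)) atTop (𝓝 a) := by
    simpa using tendsto_one_div_atTop_nhds_zero_nat.const_sub a
  refine tendsto_of_tendsto_of_tendsto_of_le_of_le' lower tendsto_const_nhds ?_ ?_
  all_goals filter_upwards [eventually_gt_atTop 0] with N hN
  · rw [sub_div' (by positivity)]
    gcongr
    exact (Int.sub_one_lt_floor _).le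
  · exact (div_le_iff₀ (by positivity)).mpr (Int.floor_le _)

theorem posDef_map_intCast {ι : Type*} [Finite ι] {G : Matrix ι ι ℤ} (hG : G.PosDef) :
    (G.map Int.cast : Matrix ι ι ℝ).PosDef := by
  classical
  cases nonempty_fintype ι
  have hermitian : (G.map Int.cast : Matrix ι ι ℝ).IsHermitian := by
    ext i j
    simpa using congrArg (Int.cast : ℤ → ℝ) (hG.isHermitian.apply i j)
  have semidef : (G.map Int.cast : Matrix ι ι ℝ).PosSemidef := by
    refine .of_dotProduct_mulVec_nonneg hermitian fun x ↦ ?_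
    let approx (N : ℕ) : ι → ℝ := (N : ℝ)⁻¹ • (Int.cast ∘ fun i ↦ ⌊x i * N⌋)
    have tendsto : Tendsto approx atTop (𝓝 x) := tendsto_pi_nhds.mpr fun i ↦ by
      simpa [approx, div_eq_inv_mul] using tendsto_intFloor_mul_div_atTop (x i)
    have continuous : Continuous fun y ↦ y ⬝ᵥ (G.map Int.cast : Matrix ι ι ℝ) *ᵥ y := by fun_prop
    refine ge_of_tendsto' ((continuous.tendsto x).comp tendsto) fun N ↦ ?_
    rw [Function.comp_apply, mulVec_smul, dotProduct_smul, smul_dotProduct,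
      ← intCast_dotProduct_mulVec, smul_eq_mul, smul_eq_mul]
    have nonneg : (0 : ℝ) ≤ _ :=
      Int.cast_nonneg (hG.posSemidef.dotProduct_mulVec_nonneg fun i ↦ ⌊x i * N⌋)
    rw [star_trivial] at nonneg
    positivity
  rw [semidef.posDef_iff_det_ne_zero, ← Int.cast_det, Int.cast_ne_zero]
  intro det_eq_zero
  obtain ⟨x, hx, hGx⟩ := exists_mulVec_eq_zero_iff.mpr det_eq_zero
  simpa [hGx] using hG.dotProduct_mulVec_pos hx

/-- The theta series of the coset `c / 2 + ℤ^ι` of the lattice with Gram matrix `G`, written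
without denominators: the vector `c / 2 + n` has norm `G(c + 2n, c + 2n) / 4`. -/
noncomputable def latticeTheta (G : Matrix ι ι ℤ) (c : ι → ℤ) : ℍ → ℂ :=
  thetaSeries fun n : ι → ℤ ↦ (((c + 2 • n) ⬝ᵥ G *ᵥ (c + 2 • n) : ℤ) : ℝ) / 4

theorem latticeTheta_zero (G : Matrix ι ι ℤ) :
    latticeTheta G 0 = thetaSeries fun n : ι → ℤ ↦ ((n ⬝ᵥ G *ᵥ n : ℤ) : ℝ) := by
  rw [latticeTheta]
  congr! 2 with n
  rw [zero_add, mulVec_smul, dotProduct_smul, smul_dotProduct, nsmul_eq_mul, nsmul_eq_mul]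
  push_cast
  ring

theorem intCast_coset_form (G : Matrix ι ι ℤ) (c n : ι → ℤ) :
    (((c + 2 • n) ⬝ᵥ G *ᵥ (c + 2 • n) : ℤ) : ℝ) / 4 =
      ((2⁻¹ : ℝ) • (Int.cast ∘ c) + Int.cast ∘ n) ⬝ᵥ
        G.map Int.cast *ᵥ ((2⁻¹ : ℝ) • (Int.cast ∘ c) + Int.cast ∘ n) := by
  have half : (Int.cast ∘ (c + 2 • n) : ι → ℝ) =
      (2 : ℝ) • ((2⁻¹ : ℝ) • (Int.cast ∘ c) + Int.cast ∘ n) := by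
    ext i
    simp [mul_add]
  rw [intCast_dotProduct_mulVec, half, mulVec_smul, dotProduct_smul, smul_dotProduct, smul_eq_mul,
    smul_eq_mul]
  ring

theorem summable_exp_neg_mul_coset_form (hG : G.PosDef) (c : ι → ℤ) {t : ℝ} (ht : 0 < t) :
    Summable fun n : ι → ℤ ↦ rexp (-t * ((((c + 2 • n) ⬝ᵥ G *ᵥ (c + 2 • n) : ℤ) : ℝ) / 4)) := by
  simpa only [intCast_coset_form] using summable_exp_neg_mul (posDef_map_intCast hG) ht _

theorem coset_form_nonneg (hG : G.PosDef) (c n : ι → ℤ) :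
    0 ≤ (((c + 2 • n) ⬝ᵥ G *ᵥ (c + 2 • n) : ℤ) : ℝ) / 4 := by
  have := hG.posSemidef.dotProduct_mulVec_nonneg (c + 2 • n)
  rw [star_trivial] at this
  positivity

theorem mdifferentiable_latticeTheta (hG : G.PosDef) (c : ι → ℤ) : MDiff (latticeTheta G c) :=
  mdifferentiable_thetaSeries (coset_form_nonneg hG c) fun _ ↦ summable_exp_neg_mul_coset_form hG c

theorem intCast_comp_mulVec (G : Matrix ι ι ℤ) (x : ι → ℤ) :
    (Int.cast ∘ (G *ᵥ x) : ι → ℝ) = G.map Int.cast *ᵥ (Int.cast ∘ x) :=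
  funext fun i ↦ (Int.castRingHom ℝ).map_mulVec G x i

theorem cpow_mul_latticeTheta_eq_tsum [DecidableEq ι] (hG : G.PosDef) (hdet : G.det = 1) (c : ι → ℤ)
    (τ : ℍ) : ((-I * τ) ^ (1 / 2 : ℂ)) ^ Fintype.card ι * latticeTheta G c τ =
      ∑' n : ι → ℤ, cexp (π * I * ↑(S • τ) * (n ⬝ᵥ G *ᵥ n : ℤ)) *
        cexp (π * I * (c ⬝ᵥ G *ᵥ n : ℤ)) := by
  have hz : 0 < (-I * τ : ℂ).re := by simpa using τ.im_pos
  have factor_ne_zero : (-I * τ : ℂ) ^ (1 / 2 : ℂ) ≠ 0 := by simp [cpow_eq_zero_iff, τ.ne_zero]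
  have det_eq_one : (G.map Int.cast : Matrix ι ι ℝ).det = 1 := by
    rw [← Int.cast_det, hdet, Int.cast_one]
  have reindex (f : (ι → ℤ) → ℂ) : ∑' n, f n = ∑' n, f (G *ᵥ n) :=
    ((toLinearEquiv' G (invertibleOfIsUnitDet G (by simp [hdet]))).toEquiv.tsum_eq f).symm
  have dual (n : ι → ℤ) :
      (Int.cast ∘ (G *ᵥ n)) ⬝ᵥ (G.map Int.cast : Matrix ι ι ℝ)⁻¹ *ᵥ (Int.cast ∘ (G *ᵥ n)) =
        ((n ⬝ᵥ G *ᵥ n : ℤ) : ℝ) := by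
    rw [intCast_comp_mulVec, mulVec_mulVec, nonsing_inv_mul _ (by simp [det_eq_one]), one_mulVec,
      dotProduct_comm, intCast_dotProduct_mulVec]
  have character (n : ι → ℤ) : (Int.cast ∘ (G *ᵥ n)) ⬝ᵥ ((2⁻¹ : ℝ) • (Int.cast ∘ c)) =
      ((c ⬝ᵥ G *ᵥ n : ℤ) : ℝ) / 2 := by
    rw [dotProduct_comm, smul_dotProduct, intCast_comp_mulVec, ← intCast_dotProduct_mulVec,
      smul_eq_mul, inv_mul_eq_div]
  have series : latticeTheta G c τ = ∑' n : ι → ℤ, cexp (-π * (-I * τ) *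
      ((((c + 2 • n) ⬝ᵥ G *ᵥ (c + 2 • n) : ℤ) : ℝ) / 4 : ℝ)) := by
    rw [latticeTheta, thetaSeries]
    ring_nf
  simp only [series, intCast_coset_form]
  rw [tsum_cexp_neg_mul_eq (posDef_map_intCast hG) hz, det_eq_one, Real.sqrt_one, ofReal_one,
    div_one, ← mul_assoc, ← mul_pow, mul_inv_cancel₀ factor_ne_zero, one_pow, one_mul,
    reindex]
  simp only [dual, character]
  congr! 3 with n
  · rw [modular_S_smul]
    simp only [ofReal_intCast, div_eq_mul_inv, mul_inv, inv_neg, inv_I, neg_neg]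
    ring_nf
  · push_cast
    ring_nf

theorem latticeTheta_S_smul [DecidableEq ι] (hG : G.PosDef) (hdet : G.det = 1) (τ : ℍ) :
    latticeTheta G 0 (S • τ) =
      ((-I * τ) ^ (1 / 2 : ℂ)) ^ Fintype.card ι * latticeTheta G 0 τ := by
  rw [cpow_mul_latticeTheta_eq_tsum hG hdet, latticeTheta_zero, thetaSeries]
  simp

/-- Characteristic vectors of the bilinear form with Gram matrix `G`. The coset `c / 2 + ℤ^ι` of
such a vector carries the expansion of `latticeTheta G 0` at the cusp `±1`. -/
def IsCharacteristic (G : Matrix ι ι ℤ) (c : ι → ℤ) : Prop :=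
  ∀ x, (2 : ℤ) ∣ x ⬝ᵥ G *ᵥ x - c ⬝ᵥ G *ᵥ x

theorem latticeTheta_T_mul_S_smul [DecidableEq ι] (hG : G.PosDef) (hdet : G.det = 1) {c : ι → ℤ}
    (hc : IsCharacteristic G c) (τ : ℍ) :
    latticeTheta G 0 ((T * S) • τ) =
      ((-I * τ) ^ (1 / 2 : ℂ)) ^ Fintype.card ι * latticeTheta G c τ := by
  rw [cpow_mul_latticeTheta_eq_tsum hG hdet, latticeTheta_zero, thetaSeries, mul_smul,
    modular_T_smul]
  congr! 2 with n
  obtain ⟨k, hk⟩ := hc n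
  rw [← Complex.exp_add, Complex.exp_eq_exp_iff_exists_int]
  refine ⟨k, ?_⟩
  rw [sub_eq_iff_eq_add.mp hk, coe_vadd]
  push_cast
  ring

theorem latticeTheta_T_sq_smul (G : Matrix ι ι ℤ) (τ : ℍ) :
    latticeTheta G 0 (T ^ 2 • τ) = latticeTheta G 0 τ := by
  rw [latticeTheta_zero, thetaSeries, thetaSeries, sq, mul_smul, modular_T_smul, modular_T_smul]
  congr! 2 with n
  rw [Complex.exp_eq_exp_iff_exists_int]
  refine ⟨n ⬝ᵥ G *ᵥ n, ?_⟩
  rw [coe_vadd, coe_vadd]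
  push_cast
  ring

end LatticeTheta

section Uniqueness

variable {ι : Type*} [Fintype ι] {G H : Matrix ι ι ℤ}

theorem pow_eight_slash_eq {A : SL(2, ℤ)} (hA : ∀ τ : ℍ, denom A τ = τ) {f g : ℍ → ℂ} {n : ℕ}
    (hfg : ∀ τ, f (A • τ) = ((-I * τ) ^ (1 / 2 : ℂ)) ^ n * g τ) :
    (f ^ 8) ∣[(4 * n : ℤ)] A = g ^ 8 := by
  ext τ
  -- The eighth power removes the root of unity from the automorphy factor `(-iτ)^(n/2)`.
  have factor : (((-I * τ : ℂ) ^ (1 / 2 : ℂ)) ^ n) ^ 8 = (τ : ℂ) ^ (4 * n : ℤ) := by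
    have sq : ((-I * τ : ℂ) ^ (1 / 2 : ℂ)) ^ 2 = -I * τ := by simp
    rw [← pow_mul, show n * 8 = 2 * (4 * n) by ring, pow_mul, sq, mul_pow, pow_mul (-I),
      Even.neg_pow (by decide), I_pow_four, one_pow, one_mul]
    norm_cast
  rw [ModularForm.SL_slash_apply, Pi.pow_apply, hfg, hA, mul_pow, factor, _root_.zpow_neg,
    mul_right_comm, mul_inv_cancel₀ (zpow_ne_zero _ τ.ne_zero), one_mul, Pi.pow_apply]

theorem summable_exp_neg_mul_form (hG : G.PosDef) {t : ℝ} (ht : 0 < t) :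
    Summable fun n : ι → ℤ ↦ rexp (-t * (n ⬝ᵥ G *ᵥ n : ℤ)) := by
  simpa only [intCast_dotProduct_mulVec, zero_add] using
    summable_exp_neg_mul (posDef_map_intCast hG) ht 0

theorem form_pos (hG : G.PosDef) {n : ι → ℤ} (hn : n ≠ 0) : 0 < n ⬝ᵥ G *ᵥ n := by
  simpa using hG.dotProduct_mulVec_pos hn

theorem latticeTheta_zero_eq_one_add (hG : G.PosDef) (τ : ℍ) :
    latticeTheta G 0 τ = 1 + cexp (π * I * τ) *
      thetaSeries (fun n : {n : ι → ℤ // n ≠ 0} ↦ ((n.1 ⬝ᵥ G *ᵥ n.1 : ℤ) : ℝ) - 1) τ := by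
  have summable := summable_cexp_pi_mul_I_mul (fun t ↦ summable_exp_neg_mul_form hG) τ
  rw [latticeTheta_zero, thetaSeries, thetaSeries, ← tsum_mul_left,
    ← summable.tsum_subtype_add_tsum_subtype_compl {0}]
  congr 1
  · simp
  · refine tsum_congr fun n ↦ ?_
    rw [← Complex.exp_add]
    push_cast
    ring_nf

theorem tendsto_thetaSeries_form_sub_one (hG : G.PosDef) :
    Tendsto (thetaSeries fun n : {n : ι → ℤ // n ≠ 0} ↦ ((n.1 ⬝ᵥ G *ᵥ n.1 : ℤ) : ℝ) - 1) atImInfty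
      (𝓝 (Nat.card {n : ι → ℤ // n ⬝ᵥ G *ᵥ n = 1} : ℂ)) := by
  have card : Nat.card {n : ι → ℤ // n ⬝ᵥ G *ᵥ n = 1} =
      Nat.card {n : {n : ι → ℤ // n ≠ 0} // ((n.1 ⬝ᵥ G *ᵥ n.1 : ℤ) : ℝ) - 1 = 0} := by
    simp only [sub_eq_zero, Int.cast_eq_one]
    refine (Nat.card_congr (Equiv.subtypeSubtypeEquivSubtype ?_)).symm
    rintro n hn rfl
    simp at hn
  rw [card]
  refine tendsto_thetaSeries_atImInfty (fun n ↦ ?_) ?_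
  · exact sub_nonneg.mpr (mod_cast form_pos hG n.2)
  · refine (((summable_exp_neg_mul_form hG Real.pi_pos).mul_left (rexp π)).subtype _).congr
      fun n ↦ ?_
    rw [Function.comp_apply, ← Real.exp_add]
    ring_nf

theorem tendsto_latticeTheta_zero (hG : G.PosDef) :
    Tendsto (latticeTheta G 0) atImInfty (𝓝 1) := by
  have exp : Tendsto (fun τ : ℍ ↦ cexp (π * I * τ)) atImInfty (𝓝 0) := by
    simpa using tendsto_cexp_pi_mul_I_mul_atImInfty one_pos
  simpa [funext (latticeTheta_zero_eq_one_add hG)] using!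
    (exp.mul (tendsto_thetaSeries_form_sub_one hG)).const_add 1

theorem IsCharacteristic.add_two_nsmul {c : ι → ℤ} (hc : IsCharacteristic G c) (n : ι → ℤ) :
    IsCharacteristic G (c + 2 • n) := fun x ↦ by
  rw [add_dotProduct, smul_dotProduct, nsmul_eq_mul, ← sub_sub]
  exact dvd_sub (hc x) (dvd_mul_right _ _)

theorem latticeTheta_isBigO (hG : G.PosDef) {m : ℤ}
    (hm : ∀ c, IsCharacteristic G c → m ≤ c ⬝ᵥ G *ᵥ c) {c : ι → ℤ} (hc : IsCharacteristic G c) :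
    latticeTheta G c =O[atImInfty] fun τ ↦ rexp (-π * (m / 4) * τ.im) := by
  refine thetaSeries_isBigO (fun n ↦ ?_) (summable_exp_neg_mul_coset_form hG c Real.pi_pos)
  have := hm _ (hc.add_two_nsmul n)
  gcongr

theorem latticeTheta_eq_of_card_le_characteristic [DecidableEq ι] (hG : G.PosDef) (hH : H.PosDef)
    (hG₁ : G.det = 1) (hH₁ : H.det = 1)
    (hGc : ∀ c, IsCharacteristic G c → (Fintype.card ι : ℤ) ≤ c ⬝ᵥ G *ᵥ c)
    (hHc : ∀ c, IsCharacteristic H c → (Fintype.card ι : ℤ) ≤ c ⬝ᵥ H *ᵥ c)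
    {c d : ι → ℤ} (hc : IsCharacteristic G c) (hd : IsCharacteristic H d) :
    latticeTheta G 0 = latticeTheta H 0 := by
  rw [← sub_eq_zero]
  refine eq_zero_of_pow_eq_zero (n := 8) <|
    eq_zero_of_slash_S_of_slash_T_sq (n := Fintype.card ι) ?_ ?_ ?_ ?_ ?_
  · exact ((mdifferentiable_latticeTheta hG 0).sub (mdifferentiable_latticeTheta hH 0)).pow 8
  · refine pow_eight_slash_eq (fun τ ↦ by simp [denom_S]) fun τ ↦ ?_
    rw [Pi.sub_apply, latticeTheta_S_smul hG hG₁, latticeTheta_S_smul hH hH₁, ← mul_sub,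
      Pi.sub_apply]
  · ext τ
    rw [ModularForm.SL_slash_apply, Pi.pow_apply, Pi.sub_apply, latticeTheta_T_sq_smul,
      latticeTheta_T_sq_smul, denom_apply]
    simp [sq T, coe_T]
  · simpa using! ((tendsto_latticeTheta_zero hG).sub (tendsto_latticeTheta_zero hH)).pow 8
  · have slash : ((latticeTheta G 0 - latticeTheta H 0) ^ 8) ∣[(4 * Fintype.card ι : ℤ)] (T * S) =
        (latticeTheta G c - latticeTheta H d) ^ 8 := by
      refine pow_eight_slash_eq (fun τ ↦ by rw [denom_apply]; simp [coe_S]) fun τ ↦ ?_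
      rw [Pi.sub_apply, latticeTheta_T_mul_S_smul hG hG₁ hc, latticeTheta_T_mul_S_smul hH hH₁ hd,
        ← mul_sub, Pi.sub_apply]
    rw [slash]
    have bound := ((latticeTheta_isBigO hG hGc hc).sub (latticeTheta_isBigO hH hHc hd)).pow 8
    refine bound.congr_right fun τ ↦ ?_
    rw [← Real.exp_nat_mul]
    push_cast
    ring_nf

theorem card_norm_one_eq (hG : G.PosDef) (hH : H.PosDef) (h : latticeTheta G 0 = latticeTheta H 0) :
    Nat.card {n : ι → ℤ // n ⬝ᵥ G *ᵥ n = 1} = Nat.card {n : ι → ℤ // n ⬝ᵥ H *ᵥ n = 1} := by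
  have tendsto_G := tendsto_thetaSeries_form_sub_one hG
  refine Nat.cast_injective <| tendsto_nhds_unique (tendsto_G.congr fun τ ↦ ?_)
    (tendsto_thetaSeries_form_sub_one hH)
  have := congrFun h τ
  rw [latticeTheta_zero_eq_one_add hG, latticeTheta_zero_eq_one_add hH] at this
  exact (mul_left_cancel₀ (Complex.exp_ne_zero _) (add_left_cancel this))

end Uniqueness

section Characteristic

variable {ι : Type*} [Fintype ι] {G : Matrix ι ι ℤ}

theorem form_add {R : Type*} [CommRing R] {G : Matrix ι ι R} (hG : G.IsSymm) (x y : ι → R) :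
    (x + y) ⬝ᵥ G *ᵥ (x + y) = x ⬝ᵥ G *ᵥ x + y ⬝ᵥ G *ᵥ y + 2 * (x ⬝ᵥ G *ᵥ y) := by
  have symm : y ⬝ᵥ G *ᵥ x = x ⬝ᵥ G *ᵥ y := by
    rw [dotProduct_mulVec, ← mulVec_transpose, hG, dotProduct_comm]
  rw [mulVec_add, dotProduct_add, add_dotProduct, add_dotProduct, symm]
  ring

theorem two_dvd_form_sub_diag_dotProduct (hG : G.IsSymm) (x : ι → ℤ) :
    (2 : ℤ) ∣ x ⬝ᵥ G *ᵥ x - G.diag ⬝ᵥ x := by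
  classical
  -- Both sides are additive modulo two, so it suffices to compare them on the standard basis.
  let form : (ι → ℤ) →+ ZMod 2 := .mk' (fun x ↦ ((x ⬝ᵥ G *ᵥ x : ℤ) : ZMod 2)) fun x y ↦ by
    have two_eq_zero : (2 : ZMod 2) = 0 := rfl
    simp [form_add hG, two_eq_zero]
  let diag : (ι → ℤ) →+ ZMod 2 := .mk' (fun x ↦ ((G.diag ⬝ᵥ x : ℤ) : ZMod 2)) fun x y ↦ by
    rw [dotProduct_add, Int.cast_add]
  have form_eq_diag : form = diag := by
    ext i
    simp [form, diag]
  exact (ZMod.intCast_eq_intCast_iff_dvd_sub _ _ 2).mp (DFunLike.congr_fun form_eq_diag x).symm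

theorem exists_isCharacteristic [DecidableEq ι] (hG : G.IsSymm) (hdet : IsUnit G.det) :
    ∃ c, IsCharacteristic G c := by
  refine ⟨G⁻¹ *ᵥ G.diag, fun x ↦ ?_⟩
  rw [dotProduct_mulVec (G⁻¹ *ᵥ _), ← mulVec_transpose, hG, mulVec_mulVec, mul_nonsing_inv G hdet,
    one_mulVec]
  exact two_dvd_form_sub_diag_dotProduct hG x

theorem card_le_of_isCharacteristic_one [DecidableEq ι] {c : ι → ℤ}
    (hc : IsCharacteristic (1 : Matrix ι ι ℤ) c) :
    (Fintype.card ι : ℤ) ≤ c ⬝ᵥ (1 : Matrix ι ι ℤ) *ᵥ c := by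
  have one_le (i : ι) : 1 ≤ c i * c i := by
    have ne_zero : c i ≠ 0 := fun h ↦ by
      have := hc (Pi.single i 1)
      simp only [one_mulVec, dotProduct_single_one, Pi.single_eq_same, h] at this
      omega
    have := mul_self_pos.mpr ne_zero
    omega
  simpa [dotProduct] using Finset.sum_le_sum fun i (_ : i ∈ Finset.univ) ↦ one_le i

end Characteristic

section UnitVectors

variable {ι : Type*} [Fintype ι] {G : Matrix ι ι ℤ}

theorem finite_norm_one (hG : G.PosDef) : {n : ι → ℤ | n ⬝ᵥ G *ᵥ n = 1}.Finite := by
  have tendsto := (summable_exp_neg_mul_form hG one_pos).tendsto_cofinite_zero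
  have := tendsto.eventually (gt_mem_nhds (Real.exp_pos (-1)))
  rw [eventually_cofinite] at this
  refine this.subset fun n (hn : n ⬝ᵥ G *ᵥ n = 1) ↦ ?_
  simp [hn]

theorem two_mul_card_le_card_norm_one [DecidableEq ι] :
    2 * Fintype.card ι ≤ Nat.card {n : ι → ℤ // n ⬝ᵥ (1 : Matrix ι ι ℤ) *ᵥ n = 1} := by
  have : Finite {n : ι → ℤ // n ⬝ᵥ (1 : Matrix ι ι ℤ) *ᵥ n = 1} := finite_norm_one .one
  let signed (p : ℤˣ × ι) : {n : ι → ℤ // n ⬝ᵥ (1 : Matrix ι ι ℤ) *ᵥ n = 1} :=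
    ⟨Pi.single p.2 p.1, by simp⟩
  have injective : Function.Injective signed := by
    rintro ⟨ε, i⟩ ⟨δ, j⟩ h
    have apply_i := congrFun (congrArg Subtype.val h) i
    obtain rfl | hij := eq_or_ne i j
    · simpa [signed, Units.ext_iff] using apply_i
    · simp [signed, hij] at apply_i
  simpa using Nat.card_le_card_of_injective signed injective

theorem ncard_le_two_mul_ncard_pos {M : Type*} [AddCommGroup M] [LinearOrder M]
    [IsOrderedAddMonoid M] {s : Set M} (hs : s.Finite) (hneg : ∀ x ∈ s, -x ∈ s) (h0 : 0 ∉ s) :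
    s.ncard ≤ 2 * {x ∈ s | 0 < x}.ncard := by
  have cover : s ⊆ {x ∈ s | 0 < x} ∪ Neg.neg '' {x ∈ s | 0 < x} := fun x hx ↦ by
    rcases lt_trichotomy x 0 with h | rfl | h
    · exact .inr ⟨-x, ⟨hneg x hx, neg_pos.mpr h⟩, neg_neg x⟩
    · exact absurd hx h0
    · exact .inl ⟨hx, h⟩
  have finite : {x ∈ s | 0 < x}.Finite := hs.sep _
  calc s.ncard ≤ _ := Set.ncard_le_ncard cover (finite.union (finite.image _))
    _ ≤ _ := Set.ncard_union_le _ _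
    _ = _ := by rw [Set.ncard_image_of_injective _ neg_injective, two_mul]

theorem form_eq_zero_of_norm_one (hG : G.PosDef) {u v : ι → ℤ} (hu : u ⬝ᵥ G *ᵥ u = 1)
    (hv : v ⬝ᵥ G *ᵥ v = 1) (h : u ≠ v) (h' : u ≠ -v) : u ⬝ᵥ G *ᵥ v = 0 := by
  have symm : G.IsSymm := hG.isHermitian
  have add := form_pos hG (mt eq_neg_of_add_eq_zero_left h')
  have sub := form_pos hG (sub_ne_zero.mpr h)
  rw [sub_eq_add_neg] at sub
  rw [form_add symm] at add sub
  simp only [mulVec_neg, dotProduct_neg, neg_dotProduct, neg_neg] at sub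
  omega

theorem exists_orthonormal (hG : G.PosDef)
    (hcard : 2 * Fintype.card ι ≤ Nat.card {n : ι → ℤ // n ⬝ᵥ G *ᵥ n = 1}) :
    ∃ p : ι → ι → ℤ, (∀ i, p i ⬝ᵥ G *ᵥ p i = 1) ∧ Pairwise fun i j ↦ p i ⬝ᵥ G *ᵥ p j = 0 := by
  -- Lexicographic positivity selects one vector from each pair `±u`.
  let _ : LinearOrder ι := LinearOrder.lift' _ (Fintype.equivFin ι).injective
  let units : Set (Lex (ι → ℤ)) := {n | ofLex n ⬝ᵥ G *ᵥ ofLex n = 1}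
  have finite : units.Finite := finite_norm_one hG
  have half := ncard_le_two_mul_ncard_pos finite (by simp [units, mulVec_neg]) (by simp [units])
  have card_le : Fintype.card ι ≤ Nat.card {n ∈ units | 0 < n} := by
    have := hcard.trans half
    rw [Nat.card_coe_set_eq]
    omega
  have := (finite.sep (0 < ·)).fintype
  rw [Nat.card_eq_fintype_card] at card_le
  obtain ⟨p⟩ := Function.Embedding.nonempty_of_card_le card_le
  refine ⟨fun i ↦ ofLex (p i).1, fun i ↦ (p i).2.1, fun i j hij ↦
    form_eq_zero_of_norm_one hG (p i).2.1 (p j).2.1 ?_ ?_⟩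
  · exact fun h ↦ hij (p.injective (Subtype.ext h))
  · intro (h : (p i).1 = -(p j).1)
    exact (neg_neg_of_pos (p j).2.2).not_gt (h ▸ (p i).2.2)

end UnitVectors

theorem det_eq_one_of_isUnit {ι : Type*} [Fintype ι] [DecidableEq ι] {G : Matrix ι ι ℤ}
    (hG : G.PosDef) (hdet : IsUnit G.det) : G.det = 1 := by
  have det_pos := (posDef_map_intCast hG).det_pos
  rw [← Int.cast_det, Int.cast_pos] at det_pos
  exact (Int.isUnit_iff.mp hdet).resolve_right (by omega)

theorem exists_mul_mul_transpose_eq_one {ι : Type*} [Fintype ι] [DecidableEq ι] {G : Matrix ι ι ℤ}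
    (hG : G.PosDef) (hdet : IsUnit G.det)
    (hchar : ∀ c, IsCharacteristic G c → (Fintype.card ι : ℤ) ≤ c ⬝ᵥ G *ᵥ c) :
    ∃ P : Matrix ι ι ℤ, P * G * Pᵀ = 1 := by
  obtain ⟨c, hc⟩ := exists_isCharacteristic hG.isHermitian hdet
  obtain ⟨d, hd⟩ := exists_isCharacteristic (isSymm_one (n := ι) (α := ℤ)) (by simp)
  have theta_eq := latticeTheta_eq_of_card_le_characteristic hG .one
    (det_eq_one_of_isUnit hG hdet) det_one hchar (fun _ ↦ card_le_of_isCharacteristic_one) hc hd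
  have card := card_norm_one_eq hG .one theta_eq
  obtain ⟨p, norm, orthogonal⟩ := exists_orthonormal hG (card ▸ two_mul_card_le_card_norm_one)
  refine ⟨.of p, Matrix.ext fun i j ↦ ?_⟩
  have entry : (of p * G * (of p)ᵀ) i j = p i ⬝ᵥ G *ᵥ p j := mul_mul_apply ..
  obtain rfl | hij := eq_or_ne i j
  · rw [entry, norm, one_apply_eq]
  · rw [entry, orthogonal hij, one_apply_ne hij]

/-- Elkies' theorem: a unimodular negative definite symmetric bilinear form on
`ℤ^b` all of whose characteristic vectors `c` satisfy `−Λ(c,c) ≥ b` is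
isomorphic over `ℤ` to the standard diagonal form `⟨−1⟩^b`. -/
theorem elkies_diagonalization
    (b : ℕ) (Λ : (Fin b → ℤ) →ₗ[ℤ] (Fin b → ℤ) →ₗ[ℤ] ℤ)
    (hsymm : ∀ x y, Λ x y = Λ y x)
    (hneg : ∀ x, x ≠ 0 → Λ x x < 0)
    (hunimod :
      (Matrix.of fun i j => Λ (Pi.single i 1) (Pi.single j 1)).det = 1 ∨
      (Matrix.of fun i j => Λ (Pi.single i 1) (Pi.single j 1)).det = -1)
    (hchar : ∀ c : Fin b → ℤ, (∀ x, (2 : ℤ) ∣ (Λ x x - Λ c x)) →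
      (b : ℤ) ≤ -(Λ c c)) :
    ∃ e : (Fin b → ℤ) ≃ₗ[ℤ] (Fin b → ℤ),
      ∀ x y, Λ (e x) (e y) = -∑ i, x i * y i := by
  let G : Matrix (Fin b) (Fin b) ℤ := -LinearMap.toMatrix₂' ℤ Λ
  have form (x y : Fin b → ℤ) : Λ x y = -(x ⬝ᵥ G *ᵥ y) := by
    rw [neg_mulVec, dotProduct_neg, neg_neg, ← toLinearMap₂'_apply' (T := ℤ),
      toLinearMap₂'_toMatrix']
  have symm : G.IsSymm := by
    ext i j
    simp [G, hsymm (Pi.single i 1)]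
  have posDef : G.PosDef := .of_dotProduct_mulVec_pos symm fun x hx ↦ by
    simpa [form] using hneg x hx
  have isUnit_det : IsUnit G.det := by
    rw [det_neg]
    exact (isUnit_one.neg.pow _).mul (Int.isUnit_iff.mpr hunimod)
  obtain ⟨P, hP⟩ := exists_mul_mul_transpose_eq_one posDef isUnit_det fun c hc ↦ by
    simpa [form] using hchar c fun x ↦ by
      simpa [form, sub_eq_add_neg, add_comm] using (hc x).neg_right
  have isUnit_det_P : IsUnit Pᵀ.det :=
    .of_mul_eq_one_right (P * G).det (by rw [← det_mul, hP, det_one])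
  refine ⟨toLinearEquiv' Pᵀ (invertibleOfIsUnitDet _ isUnit_det_P), fun x y ↦ ?_⟩
  calc Λ (Pᵀ *ᵥ x) (Pᵀ *ᵥ y) = -(x ⬝ᵥ (P * G * Pᵀ) *ᵥ y) := by
        rw [form, mulVec_transpose, ← dotProduct_mulVec, mulVec_mulVec, mulVec_mulVec, mul_assoc]
    _ = -(x ⬝ᵥ y) := by rw [hP, one_mulVec]
end
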